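/- arXiv:solv-int/9907001 — 3 statements merged into one kernel-verified Lean document; each statement's English description precedes it below -/
import Mathlib

section
/- Let a, b > 0 be real and let N ≥ 2 be an even natural number. Define the weight w̃(t) = (1−t)^{(a−1)/2}(1+t)^{(b−1)/2} on (−1,1), the polynomials q̃_{2m}(x) = p_{2m}(x), q̃_{2m+1}(x) = p_{2m+1}(x) − [8m(2m+a)(2m+b)(a+b+2m)/((a+b+4m−1)(a+b+4m)(a+b+4m+1)(a+b+4m+2))]·p_{2m−1}(x) (with p_{−1} = 0), the normalizations r̃_k = 2^{a+b+4k+2}(2k)!Γ(a+2k+1)Γ(b+2k+1)Γ(a+b+2k+1)/(Γ(a+b+4k+1)Γ(a+b+4k+3)), and Φ̃_k(x) = (1/2)∫_{−1}^{1} sgn(x−t)·q̃_k(t)·w̃(t) dt, where p_k are the monic Jacobi polynomials with parameters a, b and squared norms h_k. Then for all x, y ∈ (−1, 1): Σ_{k=0}^{N/2−1} (w̃(y)/r̃_k)·(Φ̃_{2k}(x)·q̃_{2k+1}(y) − Φ̃_{2k+1}(x)·q̃_{2k}(y)) = (1−x)^{(a+1)/2}(1+x)^{(b+1)/2}(1−y)^{(a−1)/2}(1+y)^{(b−1)/2}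 Σ_{l=0}^{N−2} p_l(x)p_l(y)/h_l + ((2N−2+a+b)/(2h_{N−2}))·w̃(y)·p_{N−1}(y)·(1/2)∫_{−1}^{1} sgn(x−t)·w̃(t)·p_{N−2}(t) dt. -/
open MeasureTheory Finset

/-- The Jacobi polynomial `P_n^{(a,b)}`. -/
noncomputable def jacobiP (a b : ℝ) (n : ℕ) (x : ℝ) : ℝ :=
  ∑ s ∈ range (n + 1),
    (Real.Gamma ((n : ℝ) + a + 1) / (Real.Gamma (a + (s : ℝ) + 1) * (Nat.factorial (n - s)))) *
    (Real.Gamma ((n : ℝ) + b + 1) / (Real.Gamma ((n : ℝ) + b - (s : ℝ) + 1) * (Nat.factorial s))) *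
    ((x - 1) / 2) ^ s * ((x + 1) / 2) ^ (n - s)

/-- The monic Jacobi polynomials `p_k = 2^k k! Γ(a+b+k+1)/Γ(a+b+2k+1) · P_k^{(a,b)}`. -/
noncomputable def jacobiMonic (a b : ℝ) (k : ℕ) (x : ℝ) : ℝ :=
  2 ^ k * (Nat.factorial k) * Real.Gamma (a + b + (k : ℝ) + 1) /
    Real.Gamma (a + b + 2 * (k : ℝ) + 1) * jacobiP a b k x

/-- The squared norms `h_k = ∫_{−1}^1 (1−x)^a (1+x)^b p_k(x)² dx`. -/
noncomputable def jacobiNorm (a b : ℝ) (k : ℕ) : ℝ :=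
  2 ^ (a + b + 1 + 2 * (k : ℝ)) * Real.Gamma ((k : ℝ) + 1) *
    Real.Gamma (a + b + (k : ℝ) + 1) * Real.Gamma (a + (k : ℝ) + 1) *
    Real.Gamma (b + (k : ℝ) + 1) /
    (Real.Gamma (a + b + 2 * (k : ℝ) + 2) * Real.Gamma (a + b + 2 * (k : ℝ) + 1))

/-- The weight `w̃(t) = (1−t)^{(a−1)/2}(1+t)^{(b−1)/2}`. -/
noncomputable def wJOE (a b t : ℝ) : ℝ := (1 - t) ^ ((a - 1) / 2) * (1 + t) ^ ((b - 1) / 2)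

/-- `q̃_{2m} = p_{2m}`, and `q̃_{2m+1} = p_{2m+1} −
[8m(2m+a)(2m+b)(a+b+2m)/((a+b+4m−1)(a+b+4m)(a+b+4m+1)(a+b+4m+2))] p_{2m−1}`. -/
noncomputable def qJOE (a b : ℝ) (j : ℕ) (x : ℝ) : ℝ :=
  if j % 2 = 0 then jacobiMonic a b j x
  else jacobiMonic a b j x -
    (4 * ((j : ℝ) - 1) * (((j : ℝ) - 1) + a) * (((j : ℝ) - 1) + b) * (a + b + ((j : ℝ) - 1)) /
      ((a + b + 2 * ((j : ℝ) - 1) - 1) * (a + b + 2 * ((j : ℝ) - 1)) *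
        (a + b + 2 * ((j : ℝ) - 1) + 1) * (a + b + 2 * ((j : ℝ) - 1) + 2)))
      * jacobiMonic a b (j - 2) x

/-- The normalizations `r̃_k`. -/
noncomputable def rJOE (a b : ℝ) (k : ℕ) : ℝ :=
  2 ^ (a + b + 4 * (k : ℝ) + 2) * (Nat.factorial (2 * k)) *
    Real.Gamma (a + 2 * (k : ℝ) + 1) * Real.Gamma (b + 2 * (k : ℝ) + 1) *
    Real.Gamma (a + b + 2 * (k : ℝ) + 1) /
    (Real.Gamma (a + b + 4 * (k : ℝ) + 1) * Real.Gamma (a + b + 4 * (k : ℝ) + 3))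

/-- `Φ̃_k(x) = (1/2)∫_{−1}^1 sgn(x−t) q̃_k(t) w̃(t) dt`. -/
noncomputable def PhiJOE (a b : ℝ) (k : ℕ) (x : ℝ) : ℝ :=
  (1 / 2) * ∫ t in Set.Ioo (-1 : ℝ) 1, Real.sign (x - t) * qJOE a b k t * wJOE a b t


/-- coefficient of the Jacobi polynomial. -/
noncomputable def jA (a b : ℝ) (n s : ℕ) : ℝ :=
  (Real.Gamma ((n : ℝ) + a + 1) / (Real.Gamma (a + (s : ℝ) + 1) * (Nat.factorial (n - s)))) *
    (Real.Gamma ((n : ℝ) + b + 1) / (Real.Gamma ((n : ℝ) + b - (s : ℝ) + 1) * (Nat.factorial s)))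

lemma jA_v (a b : ℝ) (ha : 0 < a) (hb : 0 < b) (n s : ℕ) (h : s ≤ n) :
    jA a b n s = jA a b (n+1) s * ((n + 1 - s) * (n + b - s + 1)) / ((n + 1 + a) * (n + 1 + b)) := by
  obtain ⟨d, rfl⟩ := Nat.exists_eq_add_of_le h
  have e1 : s + d + 1 - s = d + 1 := by omega
  have e2 : s + d - s = d := by omega
  unfold jA
  rw [e1, e2, Nat.factorial_succ]
  push_cast
  have g1 : Real.Gamma ((s:ℝ) + d + 1 + a + 1) = (s + d + a + 1) * Real.Gamma ((s:ℝ) + d + a + 1) := by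
    rw [← Real.Gamma_add_one (by positivity)]; congr 1; ring
  have g2 : Real.Gamma ((s:ℝ) + d + 1 + b + 1) = (s + d + b + 1) * Real.Gamma ((s:ℝ) + d + b + 1) := by
    rw [← Real.Gamma_add_one (by positivity)]; congr 1; ring
  have g3 : Real.Gamma ((s:ℝ) + d + 1 + b - s + 1) = (d + b + 1) * Real.Gamma ((d:ℝ) + b + 1) := by
    rw [← Real.Gamma_add_one (by positivity)]; congr 1; ring
  have g4 : Real.Gamma ((s:ℝ) + d + b - s + 1) = Real.Gamma ((d:ℝ) + b + 1) := by
    congr 1; ring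
  rw [g1, g2, g3, g4]
  have p1 : 0 < Real.Gamma ((d:ℝ) + b + 1) := Real.Gamma_pos_of_pos (by positivity)
  have p2 : 0 < Real.Gamma ((a:ℝ) + s + 1) := Real.Gamma_pos_of_pos (by positivity)
  have p3 : (0:ℝ) < (s.factorial : ℝ) := by positivity
  have p4 : (0:ℝ) < (d.factorial : ℝ) := by positivity
  have q1 : (0:ℝ) < s + d + 1 + a := by positivity
  have q2 : (0:ℝ) < s + d + 1 + b := by positivity
  have q3 : (0:ℝ) < d + b + 1 := by positivity
  have q4 : (0:ℝ) < d + 1 := by positivity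
  field_simp
  ring

lemma jA_u (a b : ℝ) (ha : 0 < a) (hb : 0 < b) (n s : ℕ) (h : s ≤ n) :
    jA a b n s = jA a b (n+1) (s+1) * ((s + 1) * (a + (s + 1))) / ((n + 1 + a) * (n + 1 + b)) := by
  obtain ⟨d, rfl⟩ := Nat.exists_eq_add_of_le h
  have e1 : s + d + 1 - (s + 1) = d := by omega
  have e2 : s + d - s = d := by omega
  unfold jA
  rw [e1, e2, Nat.factorial_succ]
  push_cast
  have g1 : Real.Gamma ((s:ℝ) + d + 1 + a + 1) = (s + d + a + 1) * Real.Gamma ((s:ℝ) + d + a + 1) := by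
    rw [← Real.Gamma_add_one (by positivity)]; congr 1; ring
  have g2 : Real.Gamma ((s:ℝ) + d + 1 + b + 1) = (s + d + b + 1) * Real.Gamma ((s:ℝ) + d + b + 1) := by
    rw [← Real.Gamma_add_one (by positivity)]; congr 1; ring
  have g3 : Real.Gamma ((s:ℝ) + d + 1 + b - (s + 1) + 1) = Real.Gamma ((d:ℝ) + b + 1) := by
    congr 1; ring
  have g4 : Real.Gamma ((s:ℝ) + d + b - s + 1) = Real.Gamma ((d:ℝ) + b + 1) := by
    congr 1; ring
  have g5 : Real.Gamma ((a:ℝ) + (s + 1) + 1) = (a + s + 1) * Real.Gamma (a + s + 1) := by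
    rw [← Real.Gamma_add_one (by positivity)]; congr 1; ring
  rw [g1, g2, g3, g4, g5]
  have p1 : 0 < Real.Gamma ((d:ℝ) + b + 1) := Real.Gamma_pos_of_pos (by positivity)
  have p2 : 0 < Real.Gamma ((a:ℝ) + s + 1) := Real.Gamma_pos_of_pos (by positivity)
  have p3 : (0:ℝ) < (s.factorial : ℝ) := by positivity
  have p4 : (0:ℝ) < (d.factorial : ℝ) := by positivity
  have q1 : (0:ℝ) < s + d + 1 + a := by positivity
  have q2 : (0:ℝ) < s + d + 1 + b := by positivity
  have q3 : (0:ℝ) < a + s + 1 := by positivity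
  field_simp
  ring

/-- weighted homogeneous sum. -/
noncomputable def jS (a b : ℝ) (n : ℕ) (c : ℝ → ℝ) (u v : ℝ) : ℝ :=
  ∑ s ∈ range (n + 1), c s * jA a b n s * u ^ s * v ^ (n - s)

lemma jS_v (a b : ℝ) (ha : 0 < a) (hb : 0 < b) (n : ℕ) (c : ℝ → ℝ) (u v : ℝ) :
    v * jS a b n c u v = jS a b (n+1)
      (fun s => c s * (((n + 1 - s) * (n + b - s + 1)) / ((n + 1 + a) * (n + 1 + b)))) u v := by
  unfold jS
  rw [sum_range_succ _ (n+1), mul_sum]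
  have : (fun s : ℝ => c s * ((((n:ℝ) + 1 - s) * (n + b - s + 1)) / ((n + 1 + a) * (n + 1 + b)))) ((n+1 : ℕ):ℝ) = 0 := by
    simp
  rw [this]
  simp only [zero_mul, add_zero]
  apply sum_congr rfl
  intro s hs
  have hs' : s ≤ n := by simpa [Nat.lt_succ_iff] using hs
  rw [jA_v a b ha hb n s hs', Nat.succ_sub hs', pow_succ]
  ring

lemma jS_u (a b : ℝ) (ha : 0 < a) (hb : 0 < b) (n : ℕ) (c : ℝ → ℝ) (u v : ℝ) :
    u * jS a b n c u v = jS a b (n+1)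
      (fun s => c (s - 1) * ((s * (a + s)) / ((n + 1 + a) * (n + 1 + b)))) u v := by
  unfold jS
  rw [sum_range_succ' _ (n+1), mul_sum]
  simp only [Nat.cast_zero, zero_mul, zero_div, mul_zero, add_zero]
  apply sum_congr rfl
  intro s hs
  have hs' : s ≤ n := by simpa [Nat.lt_succ_iff] using hs
  rw [jA_u a b ha hb n s hs', Nat.add_sub_add_right, pow_succ]
  push_cast
  rw [add_sub_cancel_right]
  ring

lemma jS_add (a b : ℝ) (n : ℕ) (c d : ℝ → ℝ) (k l u v : ℝ) :
    k * jS a b n c u v + l * jS a b n d u v = jS a b n (fun s => k * c s + l * d s) u v := by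
  unfold jS
  rw [mul_sum, mul_sum, ← sum_add_distrib]
  apply sum_congr rfl; intros; ring

lemma jacobiP_eq (a b : ℝ) (n : ℕ) (x : ℝ) :
    jacobiP a b n x = jS a b n (fun _ => 1) ((x-1)/2) ((x+1)/2) := by
  unfold jacobiP jS jA
  apply sum_congr rfl; intros; ring

/-- derivative -/
lemma jacobiP_deriv (a b : ℝ) (n : ℕ) (x : ℝ) :
    ∃ d, HasDerivAt (jacobiP a b n) d x ∧
      (1 - x^2) * d = -2 * ((x+1)/2 * jS a b n (fun s => s) ((x-1)/2) ((x+1)/2)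
        + (x-1)/2 * jS a b n (fun s => n - s) ((x-1)/2) ((x+1)/2)) := by
  have hu : HasDerivAt (fun x : ℝ => (x-1)/2) (1/2) x := ((hasDerivAt_id x).sub_const 1).div_const 2
  have hv : HasDerivAt (fun x : ℝ => (x+1)/2) (1/2) x := ((hasDerivAt_id x).add_const 1).div_const 2
  have h := HasDerivAt.fun_sum (u := range (n+1)) (x := x) (A := fun s x => jA a b n s * (((x-1)/2)^s * ((x+1)/2)^(n-s)))
    (A' := fun s => jA a b n s * ((s * ((x-1)/2)^(s-1) * (1/2)) * ((x+1)/2)^(n-s) + ((x-1)/2)^s * (((n-s : ℕ):ℝ) * ((x+1)/2)^(n-s-1) * (1/2))))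
    (fun s _ => ((hu.pow s).mul (hv.pow (n-s))).const_mul _)
  have hf : jacobiP a b n = fun x => ∑ s ∈ range (n+1), jA a b n s * (((x-1)/2)^s * ((x+1)/2)^(n-s)) := by
    ext y
    rw [jacobiP_eq]; unfold jS
    apply sum_congr rfl; intros; ring
  refine ⟨_, hf ▸ h, ?_⟩
  · unfold jS
    rw [mul_sum, mul_sum, mul_sum, ← sum_add_distrib, mul_sum]
    apply sum_congr rfl
    intro s hs
    have hs' : s ≤ n := by simpa [Nat.lt_succ_iff] using hs
    obtain ⟨d, rfl⟩ := Nat.exists_eq_add_of_le hs'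
    have e2 : s + d - s = d := by omega
    rw [e2]
    have k1 : ∀ (u : ℝ) (s : ℕ), (s:ℝ) * u^s = u * (s * u^(s-1)) := by
      intro u s
      cases s with
      | zero => simp
      | succ s => simp [pow_succ]; ring
    have k2 := k1 ((x-1)/2) s
    have k3 := k1 ((x+1)/2) d
    push_cast
    set U := ((x-1)/2)^(s-1)
    set V := ((x+1)/2)^(d-1)
    linear_combination 2 * (x+1)/2 * jA a b (s+d) s * ((x+1)/2)^d * k2 + 2 * (x-1)/2 * jA a b (s+d) s * ((x-1)/2)^s * k3

/-- prefactor -/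
noncomputable def jK (a b : ℝ) (k : ℕ) : ℝ := 2 ^ k * (Nat.factorial k) * Real.Gamma (a + b + (k : ℝ) + 1) /
    Real.Gamma (a + b + 2 * (k : ℝ) + 1)

lemma jK_succ (a b : ℝ) (ha : 0 < a) (hb : 0 < b) (n : ℕ) :
    jK a b (n+1) = jK a b n * (2 * (n+1) * (a+b+n+1) / ((a+b+2*n+1)*(a+b+2*n+2))) := by
  unfold jK
  rw [Nat.factorial_succ, pow_succ]
  push_cast
  have g1 : Real.Gamma (a + b + (n + 1) + 1) = (a + b + n + 1) * Real.Gamma (a + b + n + 1) := by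
    rw [← Real.Gamma_add_one (by positivity)]; congr 1; ring
  have g2 : Real.Gamma (a + b + 2 * (n + 1) + 1) = (a + b + 2 * n + 2) * ((a + b + 2 * n + 1) * Real.Gamma (a + b + 2 * n + 1)) := by
    rw [← Real.Gamma_add_one (by positivity), show a + b + 2 * (n:ℝ) + 1 + 1 = a + b + 2 * n + 2 by ring,
      ← Real.Gamma_add_one (by positivity)]
    congr 1; ring
  rw [g1, g2]
  have p1 : 0 < Real.Gamma (a + b + 2 * n + 1) := Real.Gamma_pos_of_pos (by positivity)
  have q1 : 0 < a + b + 2 * n + 1 := by positivity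
  have q2 : 0 < a + b + 2 * n + 2 := by positivity
  field_simp

/-- the coefficient c(n) -/
noncomputable def jc (a b : ℝ) (n : ℝ) : ℝ :=
  4 * n * (n + a) * (n + b) * (a + b + n) /
      ((a + b + 2 * n - 1) * (a + b + 2 * n) * (a + b + 2 * n + 1) * (a + b + 2 * n + 2))

lemma jc_K (a b : ℝ) (ha : 0 < a) (hb : 0 < b) (n : ℕ) :
    jc a b ((n:ℝ)+1) * jK a b n = jK a b (n+1) * (2 * (n+1+a)*(n+1+b)/((a+b+2*(n+1)+1)*(a+b+2*(n+1)+2))) := by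
  rw [jK_succ a b ha hb]
  unfold jc
  have q1 : 0 < a + b + 2 * n + 1 := by positivity
  have q2 : 0 < a + b + 2 * n + 2 := by positivity
  have q3 : 0 < a + b + 2 * (n + 1) + 1 := by positivity
  have q4 : 0 < a + b + 2 * (n + 1) + 2 := by positivity
  have e1 : a + b + 2 * ((n:ℝ) + 1) - 1 = a + b + 2 * n + 1 := by ring
  have e2 : a + b + 2 * ((n:ℝ) + 1) = a + b + 2 * n + 2 := by ring
  rw [e1]
  rw [e2] at *
  field_simp
  ring

lemma core_zero (a b : ℝ) (ha : 0 < a) (hb : 0 < b) (u v : ℝ) :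
    2 * (v * jS a b 0 (fun s => s) u v + u * jS a b 0 (fun s => ((0:ℕ):ℝ) - s) u v)
      + (a+1) * (v * jS a b 0 (fun _ => 1) u v) + (b+1) * (u * jS a b 0 (fun _ => 1) u v)
     = jS a b 1 (fun _ => 1) u v := by
  simp only [jS_v a b ha hb, jS_u a b ha hb]
  unfold jS
  apply (sub_eq_zero.1 _)
  simp only [mul_sum, ← sum_add_distrib, ← sum_sub_distrib]
  apply sum_eq_zero
  intro s hs
  have hs' : s = 0 ∨ s = 1 := by simp at hs; omega
  rcases hs' with rfl | rfl
  · simp; field_simp; ring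
  · simp; field_simp; ring

lemma core_succ (a b : ℝ) (ha : 0 < a) (hb : 0 < b) (n : ℕ) (u v : ℝ) :
    2 * (v * jS a b (n+1) (fun s => s) u v + u * jS a b (n+1) (fun s => ((n+1:ℕ):ℝ) - s) u v)
      + (a+1) * (v * jS a b (n+1) (fun _ => 1) u v) + (b+1) * (u * jS a b (n+1) (fun _ => 1) u v)
     = 1 / (a+b+2*(n+1)+1) * (((n:ℝ)+2)*(a+b+n+2) * jS a b (n+2) (fun _ => 1) u v
       - (n+1+a) * (n+1+b) * (v * (v * jS a b n (fun _ => 1) u v) - 2 * (u * (v * jS a b n (fun _ => 1) u v))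
          + u * (u * jS a b n (fun _ => 1) u v))) := by
  simp only [jS_v a b ha hb, jS_u a b ha hb]
  unfold jS
  apply (sub_eq_zero.1 _)
  simp only [mul_sum, ← sum_add_distrib, ← sum_sub_distrib]
  apply sum_eq_zero
  intro s hs
  have q1 : a + b + 2 * ((n:ℝ) + 1) + 1 ≠ 0 := by positivity
  have q2 : (n:ℝ) + 1 + a ≠ 0 := by positivity
  have q3 : (n:ℝ) + 1 + b ≠ 0 := by positivity
  have q4 : (n:ℝ) + 1 + 1 + a ≠ 0 := by positivity
  have q5 : (n:ℝ) + 1 + 1 + b ≠ 0 := by positivity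
  push_cast
  have e : n + 1 + 1 = n + 2 := rfl
  rw [e]
  field_simp
  ring

lemma jM_eq (a b : ℝ) (n : ℕ) (x : ℝ) : jacobiMonic a b n x = jK a b n * jacobiP a b n x := rfl

lemma jM_deriv (a b : ℝ) (ha : 0 < a) (hb : 0 < b) (n : ℕ) (x : ℝ) :
    ∃ d, HasDerivAt (jacobiMonic a b n) d x ∧
      (1 - x^2) * d + ((b-a)/2 - (a+b+2)/2 * x) * jacobiMonic a b n x
        = -((a+b+2*n+2)/2) * (jacobiMonic a b (n+1) x - jc a b n * jacobiMonic a b (n-1) x) := by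
  obtain ⟨d, hd, hd2⟩ := jacobiP_deriv a b n x
  refine ⟨jK a b n * d, hd.const_mul _, ?_⟩
  simp only [jM_eq, jacobiP_eq]
  cases n with
  | zero =>
    have h := core_zero a b ha hb ((x-1)/2) ((x+1)/2)
    have hK := jK_succ a b ha hb 0
    have hc : jc a b ((0:ℕ):ℝ) = 0 := by simp [jc]
    rw [hK, hc]
    have q1 : a + b + 1 ≠ 0 := by positivity
    have q2 : a + b + 2 ≠ 0 := by positivity
    simp only [Nat.cast_zero] at *
    have : (2 * ((0:ℝ) + 1) * (a + b + 0 + 1) / ((a + b + 2 * 0 + 1) * (a + b + 2 * 0 + 2))) = 2 / (a+b+2) := by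
      simp only [mul_zero, add_zero]; field_simp; ring
    rw [this]
    simp only [zero_add, mul_zero, add_zero, zero_mul, sub_zero] at *
    have h3 : -((a+b+2)/2) * (jK a b 0 * (2/(a+b+2)) * jS a b 1 (fun _ => 1) ((x-1)/2) ((x+1)/2)) = - jK a b 0 * jS a b 1 (fun _ => 1) ((x-1)/2) ((x+1)/2) := by
      field_simp
    rw [h3, ← h]
    linear_combination jK a b 0 * hd2
  | succ n =>
    have h := core_succ a b ha hb n ((x-1)/2) ((x+1)/2)
    have hK := jK_succ a b ha hb (n+1)
    have hc := jc_K a b ha hb n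
    push_cast at *
    rw [← mul_assoc (jc a b _), hc, hK]
    have q1 : a + b + 2 * ((n:ℝ)+1) + 1 ≠ 0 := by positivity
    have q2 : a + b + 2 * ((n:ℝ)+1) + 2 ≠ 0 := by positivity
    have h4 : ∀ X Y Z : ℝ, -((a + b + 2 * ((n:ℝ)+1) + 2)/2) * (Z * (2 * ((n:ℝ)+1+1)*(a+b+(n+1)+1) / ((a + b + 2 * ((n:ℝ)+1) + 1)*(a + b + 2 * ((n:ℝ)+1) + 2))) * X - Z * (2 * (n+1+a)*(n+1+b)/((a+b+2*(n+1)+1)*(a+b+2*(n+1)+2))) * Y)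
       = - Z * (1 / (a+b+2*(n+1)+1) * (((n:ℝ)+2)*(a+b+n+2) * X - (n+1+a) * (n+1+b) * Y)) := by
      intro X Y Z; field_simp; ring
    rw [h4]
    have h5 : ∀ Y : ℝ, (x+1)/2 * ((x+1)/2 * Y) - 2 * ((x-1)/2 * ((x+1)/2 * Y)) + (x-1)/2 * ((x-1)/2 * Y) = Y := by
      intro Y; ring
    rw [h5] at h
    have e : n + 1 + 1 = n + 2 := rfl
    rw [e, ← h]
    linear_combination jK a b (n+1) * hd2

lemma wJOE_int (a b : ℝ) (ha : 0 < a) (hb : 0 < b) :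
    IntervalIntegrable (wJOE a b) volume (-1) 1 := by
  have h1 : IntervalIntegrable (wJOE a b) volume (-1) 0 := by
    have h : IntervalIntegrable (fun t : ℝ => (1 + t) ^ ((b - 1) / 2)) volume (-1) 0 := by
      have := (intervalIntegral.intervalIntegrable_rpow' (a := 0) (b := 1) (r := (b-1)/2) (by linarith)).comp_add_left 1
      simpa using this
    refine h.continuousOn_mul (g := fun t : ℝ => (1 - t) ^ ((a - 1) / 2)) ?_
    apply ContinuousOn.rpow_const (by fun_prop)
    intro t ht
    rw [Set.uIcc_of_le (by norm_num)] at ht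
    left; linarith [ht.2]
  have h2 : IntervalIntegrable (wJOE a b) volume 0 1 := by
    have h : IntervalIntegrable (fun t : ℝ => (1 - t) ^ ((a - 1) / 2)) volume 0 1 := by
      have := (intervalIntegral.intervalIntegrable_rpow' (a := 1) (b := 0) (r := (a-1)/2) (by linarith)).comp_sub_left 1
      simpa using this
    refine h.mul_continuousOn (g := fun t : ℝ => (1 + t) ^ ((b - 1) / 2)) ?_
    apply ContinuousOn.rpow_const (by fun_prop)
    intro t ht
    rw [Set.uIcc_of_le (by norm_num)] at ht
    left; linarith [ht.1]
  exact h1.trans h2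

/-- half signed integral -/
noncomputable def jI (a b x : ℝ) (f : ℝ → ℝ) : ℝ :=
  (1 / 2) * ∫ t in Set.Ioo (-1 : ℝ) 1, Real.sign (x - t) * f t * wJOE a b t

lemma fw_int (a b : ℝ) (ha : 0 < a) (hb : 0 < b) (f : ℝ → ℝ) (hf : Continuous f) :
    IntervalIntegrable (fun t => f t * wJOE a b t) volume (-1) 1 :=
  (wJOE_int a b ha hb).continuousOn_mul hf.continuousOn

lemma jI_eq (a b : ℝ) (ha : 0 < a) (hb : 0 < b) (x : ℝ) (hx : x ∈ Set.Ioo (-1 : ℝ) 1)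
    (f : ℝ → ℝ) (hf : Continuous f) :
    jI a b x f = (1/2) * ((∫ t in (-1)..x, f t * wJOE a b t) - ∫ t in x..1, f t * wJOE a b t) := by
  obtain ⟨h1, h2⟩ := hx
  have hi := fw_int a b ha hb f hf
  have hiA : IntervalIntegrable (fun t => f t * wJOE a b t) volume (-1) x :=
    hi.mono_set (by rw [Set.uIcc_of_le h1.le, Set.uIcc_of_le (by norm_num)]; exact Set.Icc_subset_Icc le_rfl h2.le)
  have hiB : IntervalIntegrable (fun t => f t * wJOE a b t) volume x 1 :=
    hi.mono_set (by rw [Set.uIcc_of_le h2.le, Set.uIcc_of_le (by norm_num)]; exact Set.Icc_subset_Icc h1.le le_rfl)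
  have hu : Set.Ioc (-1:ℝ) x ∪ Set.Ioo x 1 = Set.Ioo (-1) 1 := by
    ext t; simp only [Set.mem_union, Set.mem_Ioc, Set.mem_Ioo]
    constructor
    · rintro (⟨p, q⟩ | ⟨p, q⟩) <;> constructor <;> linarith
    · rintro ⟨p, q⟩
      rcases le_or_gt t x with h | h
      · left; exact ⟨p, h⟩
      · right; exact ⟨h, q⟩
  have hd : Disjoint (Set.Ioc (-1:ℝ) x) (Set.Ioo x 1) := by
    rw [Set.disjoint_left]; intro t ht ht'; exact absurd ht.2 (not_le.2 ht'.1)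
  rw [intervalIntegrable_iff_integrableOn_Ioc_of_le h1.le] at hiA
  rw [intervalIntegrable_iff_integrableOn_Ioo_of_le h2.le] at hiB
  rw [intervalIntegral.integral_of_le h1.le, intervalIntegral.integral_of_le h2.le, integral_Ioc_eq_integral_Ioo (x := x) (y := 1)]
  have hx0 : ∀ᵐ t : ℝ, t ≠ x := by
    simp [ae_iff]
  have eA : ∀ᵐ t : ℝ, t ∈ Set.Ioc (-1:ℝ) x → f t * wJOE a b t = Real.sign (x - t) * f t * wJOE a b t := by
    filter_upwards [hx0] with t ht ht'
    rw [Real.sign_of_pos (sub_pos.2 (lt_of_le_of_ne ht'.2 ht))]; ring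
  have eB : ∀ᵐ t : ℝ, t ∈ Set.Ioo x (1:ℝ) → -(f t * wJOE a b t) = Real.sign (x - t) * f t * wJOE a b t := by
    filter_upwards with t ht'
    rw [Real.sign_of_neg (sub_neg.2 ht'.1)]; ring
  unfold jI
  rw [← hu, setIntegral_union hd measurableSet_Ioo
    (hiA.congr ((ae_restrict_iff' measurableSet_Ioc).2 eA))
    (hiB.neg.congr ((ae_restrict_iff' measurableSet_Ioo).2 eB)),
    ← setIntegral_congr_ae measurableSet_Ioc eA, ← setIntegral_congr_ae measurableSet_Ioo eB, integral_neg]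
  ring

lemma jI_sub (a b : ℝ) (ha : 0 < a) (hb : 0 < b) (x : ℝ) (hx : x ∈ Set.Ioo (-1 : ℝ) 1)
    (f g : ℝ → ℝ) (hf : Continuous f) (hg : Continuous g) (c : ℝ) :
    jI a b x (fun t => f t - c * g t) = jI a b x f - c * jI a b x g := by
  rw [jI_eq a b ha hb x hx _ hf, jI_eq a b ha hb x hx _ hg, jI_eq a b ha hb x hx _ (by fun_prop)]
  obtain ⟨h1, h2⟩ := hx
  have hA : Set.uIcc (-1) x ⊆ Set.uIcc (-1:ℝ) 1 := by
    rw [Set.uIcc_of_le h1.le, Set.uIcc_of_le (by norm_num)]; exact Set.Icc_subset_Icc le_rfl h2.le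
  have hB : Set.uIcc x 1 ⊆ Set.uIcc (-1:ℝ) 1 := by
    rw [Set.uIcc_of_le h2.le, Set.uIcc_of_le (by norm_num)]; exact Set.Icc_subset_Icc h1.le le_rfl
  have hfi := fw_int a b ha hb f hf
  have hgi := fw_int a b ha hb g hg
  have e : ∀ t, (f t - c * g t) * wJOE a b t = f t * wJOE a b t - c * (g t * wJOE a b t) := by
    intro t; ring
  simp only [e]
  rw [intervalIntegral.integral_sub (hfi.mono_set hA) ((hgi.mono_set hA).const_mul c),
    intervalIntegral.integral_sub (hfi.mono_set hB) ((hgi.mono_set hB).const_mul c),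
    intervalIntegral.integral_const_mul, intervalIntegral.integral_const_mul]
  ring

/-- W -/
noncomputable def jW (a b t : ℝ) : ℝ := (1 - t) ^ ((a + 1) / 2) * (1 + t) ^ ((b + 1) / 2)

lemma jM_cont (a b : ℝ) (n : ℕ) : Continuous (jacobiMonic a b n) := by
  unfold jacobiMonic jacobiP
  fun_prop

lemma jI_key (a b : ℝ) (ha : 0 < a) (hb : 0 < b) (x : ℝ) (hx : x ∈ Set.Ioo (-1 : ℝ) 1) (n : ℕ) :
    jW a b x * jacobiMonic a b n x = -((a+b+2*n+2)/2) *
      (jI a b x (jacobiMonic a b (n+1)) - jc a b n * jI a b x (jacobiMonic a b (n-1))) := by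
  have hc : ∀ n, Continuous (jacobiMonic a b n) := jM_cont a b
  rw [← jI_sub a b ha hb x hx _ _ (hc _) (hc _)]
  set Q : ℝ → ℝ := fun t => jacobiMonic a b (n+1) t - jc a b n * jacobiMonic a b (n-1) t with hQ
  have hQc : Continuous Q := (hc _).sub (continuous_const.mul (hc _))
  rw [jI_eq a b ha hb x hx Q hQc]
  have hi := fw_int a b ha hb Q hQc
  set F : ℝ → ℝ := fun t => jW a b t * jacobiMonic a b n t with hF
  have hFc : Continuous F := by
    apply Continuous.mul _ (hc n)
    unfold jW
    apply Continuous.mul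
    · exact (continuous_const.sub continuous_id).rpow_const (fun t => Or.inr (by linarith))
    · exact (continuous_const.add continuous_id).rpow_const (fun t => Or.inr (by linarith))
  have hder : ∀ t ∈ Set.Ioo (-1:ℝ) 1, HasDerivAt F (-((a+b+2*n+2)/2) * (Q t * wJOE a b t)) t := by
    intro t ht
    obtain ⟨d, hd, hd2⟩ := jM_deriv a b ha hb n t
    have t1 : 0 < 1 - t := by linarith [ht.2]
    have t2 : 0 < 1 + t := by linarith [ht.1]
    have k1 : HasDerivAt (fun t : ℝ => (1 - t) ^ ((a + 1) / 2)) ((-1) * ((a+1)/2) * (1-t)^((a+1)/2 - 1)) t :=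
      ((hasDerivAt_id t).const_sub 1).rpow_const (Or.inl t1.ne')
    have k2 : HasDerivAt (fun t : ℝ => (1 + t) ^ ((b + 1) / 2)) (1 * ((b+1)/2) * (1+t)^((b+1)/2 - 1)) t :=
      ((hasDerivAt_id t).const_add 1).rpow_const (Or.inl t2.ne')
    have k := (k1.mul k2).mul hd
    refine k.congr_deriv ?_
    have e1 : (a+1)/2 - 1 = (a-1)/2 := by ring
    have e2 : (b+1)/2 - 1 = (b-1)/2 := by ring
    have e3 : (1-t)^((a+1)/2) = (1-t) * (1-t)^((a-1)/2) := by
      rw [← e1, Real.rpow_sub_one t1.ne']; field_simp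
    have e4 : (1+t)^((b+1)/2) = (1+t) * (1+t)^((b-1)/2) := by
      rw [← e2, Real.rpow_sub_one t2.ne']; field_simp
    simp only [Pi.mul_apply]
    rw [e1, e2, e3, e4]
    unfold wJOE
    rw [hQ]
    linear_combination (1-t)^((a-1)/2) * (1+t)^((b-1)/2) * hd2
  obtain ⟨h1, h2⟩ := hx
  have hA : Set.uIcc (-1) x ⊆ Set.uIcc (-1:ℝ) 1 := by
    rw [Set.uIcc_of_le h1.le, Set.uIcc_of_le (by norm_num)]; exact Set.Icc_subset_Icc le_rfl h2.le
  have hB : Set.uIcc x 1 ⊆ Set.uIcc (-1:ℝ) 1 := by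
    rw [Set.uIcc_of_le h2.le, Set.uIcc_of_le (by norm_num)]; exact Set.Icc_subset_Icc h1.le le_rfl
  have i1 := intervalIntegral.integral_eq_sub_of_hasDerivAt_of_le h1.le hFc.continuousOn
    (fun t ht => hder t ⟨ht.1, ht.2.trans h2⟩) ((hi.mono_set hA).const_mul _)
  have i2 := intervalIntegral.integral_eq_sub_of_hasDerivAt_of_le h2.le hFc.continuousOn
    (fun t ht => hder t ⟨h1.trans ht.1, ht.2⟩) ((hi.mono_set hB).const_mul _)
  rw [intervalIntegral.integral_const_mul] at i1 i2
  have z1 : F (-1) = 0 := by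
    simp only [hF, jW]; rw [show (1:ℝ) + -1 = 0 by norm_num, Real.zero_rpow (by positivity)]; ring
  have z2 : F 1 = 0 := by
    simp only [hF, jW]; rw [show (1:ℝ) - 1 = 0 by norm_num, Real.zero_rpow (by positivity)]; ring
  have : F x = jW a b x * jacobiMonic a b n x := rfl
  linear_combination -(1/2) * i1 + (1/2) * i2 + (1/2) * z1 + (1/2) * z2

lemma jN_pos (a b : ℝ) (ha : 0 < a) (hb : 0 < b) (n : ℕ) : 0 < jacobiNorm a b n := by
  unfold jacobiNorm
  have p1 : 0 < Real.Gamma ((n:ℝ) + 1) := Real.Gamma_pos_of_pos (by positivity)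
  have p2 : 0 < Real.Gamma (a + b + n + 1) := Real.Gamma_pos_of_pos (by positivity)
  have p3 : 0 < Real.Gamma (a + n + 1) := Real.Gamma_pos_of_pos (by positivity)
  have p4 : 0 < Real.Gamma (b + n + 1) := Real.Gamma_pos_of_pos (by positivity)
  have p5 : 0 < Real.Gamma (a + b + 2 * n + 2) := Real.Gamma_pos_of_pos (by positivity)
  have p6 : 0 < Real.Gamma (a + b + 2 * n + 1) := Real.Gamma_pos_of_pos (by positivity)
  positivity

lemma jN_succ (a b : ℝ) (ha : 0 < a) (hb : 0 < b) (n : ℕ) :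
    jacobiNorm a b (n+1) = jacobiNorm a b n * (4 * (n+1) * (a+b+n+1) * (a+n+1) * (b+n+1) /
      ((a+b+2*n+3) * (a+b+2*n+2)^2 * (a+b+2*n+1))) := by
  unfold jacobiNorm
  push_cast
  have g1 : Real.Gamma ((n:ℝ) + 1 + 1) = (n + 1) * Real.Gamma ((n:ℝ) + 1) :=
    Real.Gamma_add_one (by positivity)
  have g2 : Real.Gamma (a + b + (n + 1) + 1) = (a + b + n + 1) * Real.Gamma (a + b + n + 1) := by
    rw [← Real.Gamma_add_one (by positivity)]; congr 1; ring
  have g3 : Real.Gamma (a + (n + 1) + 1) = (a + n + 1) * Real.Gamma (a + n + 1) := by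
    rw [← Real.Gamma_add_one (by positivity)]; congr 1; ring
  have g4 : Real.Gamma (b + (n + 1) + 1) = (b + n + 1) * Real.Gamma (b + n + 1) := by
    rw [← Real.Gamma_add_one (by positivity)]; congr 1; ring
  have g5 : Real.Gamma (a + b + 2 * n + 2) = (a + b + 2 * n + 1) * Real.Gamma (a + b + 2 * n + 1) := by
    rw [← Real.Gamma_add_one (by positivity)]; congr 1; ring
  have g6 : Real.Gamma (a + b + 2 * n + 3) = (a + b + 2 * n + 2) * Real.Gamma (a + b + 2 * n + 2) := by
    rw [← Real.Gamma_add_one (by positivity)]; congr 1; ring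
  have g7 : Real.Gamma (a + b + 2 * (n + 1) + 2) = (a + b + 2 * n + 3) * Real.Gamma (a + b + 2 * n + 3) := by
    rw [← Real.Gamma_add_one (by positivity)]; congr 1; ring
  have g8 : Real.Gamma (a + b + 2 * (n + 1) + 1) = Real.Gamma (a + b + 2 * n + 3) := by
    congr 1; ring
  have g9 : (2:ℝ) ^ (a + b + 1 + 2 * ((n:ℝ) + 1)) = 2 ^ (a + b + 1 + 2 * (n:ℝ)) * 4 := by
    rw [show a + b + 1 + 2 * ((n:ℝ) + 1) = a + b + 1 + 2 * (n:ℝ) + (2:ℕ) by push_cast; ring,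
      Real.rpow_add (by norm_num), Real.rpow_natCast]
    norm_num
  rw [g1, g2, g3, g4, g7, g8, g6, g5, g9]
  have p6 : 0 < Real.Gamma (a + b + 2 * n + 1) := Real.Gamma_pos_of_pos (by positivity)
  have q1 : 0 < a + b + 2 * n + 1 := by positivity
  have q2 : 0 < a + b + 2 * n + 2 := by positivity
  have q3 : 0 < a + b + 2 * n + 3 := by positivity
  field_simp

lemma r_eq (a b : ℝ) (ha : 0 < a) (hb : 0 < b) (k : ℕ) :
    1 / rJOE a b k = (a + b + 4 * k + 2) / (2 * jacobiNorm a b (2 * k)) := by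
  have hN := jN_pos a b ha hb (2*k)
  have : rJOE a b k = 2 * jacobiNorm a b (2*k) / (a + b + 4 * k + 2) := by
    unfold rJOE jacobiNorm
    push_cast
    rw [show a + b + 2 * (2 * (k:ℝ)) + 2 = a + b + 4 * k + 2 by ring,
      show a + b + 2 * (2 * (k:ℝ)) + 1 = a + b + 4 * k + 1 by ring,
      show a + b + 1 + 2 * (2 * (k:ℝ)) = a + b + 4 * k + 1 by ring]
    have g1 : Real.Gamma (a + b + 4 * k + 3) = (a + b + 4 * k + 2) * Real.Gamma (a + b + 4 * k + 2) := by
      rw [← Real.Gamma_add_one (by positivity)]; congr 1; ring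
    have g2 : Real.Gamma (2 * (k:ℝ) + 1) = ((2 * k).factorial : ℝ) := by
      rw [← Real.Gamma_nat_eq_factorial]; push_cast; rfl
    have g9 : (2:ℝ) ^ (a + b + 4 * (k:ℝ) + 2) = 2 ^ (a + b + 4 * (k:ℝ) + 1) * 2 := by
      rw [← Real.rpow_add_one (by norm_num)]; congr 1; ring
    rw [g1, g2, g9]
    have p6 : 0 < Real.Gamma (a + b + 4 * k + 1) := Real.Gamma_pos_of_pos (by positivity)
    have p7 : 0 < Real.Gamma (a + b + 4 * k + 2) := Real.Gamma_pos_of_pos (by positivity)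
    have q1 : 0 < a + b + 4 * k + 2 := by positivity
    field_simp
  rw [this]
  have q1 : 0 < a + b + 4 * k + 2 := by positivity
  field_simp

lemma q_even (a b : ℝ) (k : ℕ) : qJOE a b (2 * k) = jacobiMonic a b (2 * k) := by
  ext t; simp [qJOE]

lemma q_odd (a b : ℝ) (k : ℕ) (t : ℝ) : qJOE a b (2 * k + 1) t =
    jacobiMonic a b (2 * k + 1) t - jc a b ((2 * k : ℕ) : ℝ) * jacobiMonic a b (2 * k - 1) t := by
  have : (2 * k + 1) % 2 ≠ 0 := by omega
  have e : 2 * k + 1 - 2 = 2 * k - 1 := by omega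
  simp only [qJOE, if_neg this, e, jc]
  push_cast
  rw [add_sub_cancel_right]

lemma Phi_even (a b x : ℝ) (k : ℕ) : PhiJOE a b (2 * k) x = jI a b x (jacobiMonic a b (2 * k)) := by
  unfold PhiJOE jI; rw [q_even]

lemma Phi_odd (a b : ℝ) (ha : 0 < a) (hb : 0 < b) (x : ℝ) (hx : x ∈ Set.Ioo (-1 : ℝ) 1) (k : ℕ) :
    PhiJOE a b (2 * k + 1) x / rJOE a b k = - (jW a b x * jacobiMonic a b (2 * k) x / jacobiNorm a b (2 * k)) := by
  have h := jI_key a b ha hb x hx (2 * k)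
  have hr := r_eq a b ha hb k
  have hN := jN_pos a b ha hb (2*k)
  have e : PhiJOE a b (2 * k + 1) x = jI a b x (jacobiMonic a b (2*k+1)) - jc a b ((2 * k : ℕ) : ℝ) * jI a b x (jacobiMonic a b (2*k-1)) := by
    rw [← jI_sub a b ha hb x hx _ _ (jM_cont a b _) (jM_cont a b _)]
    unfold PhiJOE jI
    simp only [q_odd]
  rw [← e] at h
  rw [h, div_eq_mul_one_div, hr]
  push_cast
  field_simp
  ring

lemma odd_rel (a b : ℝ) (ha : 0 < a) (hb : 0 < b) (x : ℝ) (hx : x ∈ Set.Ioo (-1 : ℝ) 1) (k : ℕ) :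
    jc a b ((2 * (k+1) : ℕ) : ℝ) * (1 / rJOE a b (k+1)) * PhiJOE a b (2 * (k+1)) x - 1 / rJOE a b k * PhiJOE a b (2 * k) x
      = - (jW a b x * jacobiMonic a b (2 * k + 1) x / jacobiNorm a b (2 * k + 1)) := by
  have h := jI_key a b ha hb x hx (2 * k + 1)
  rw [Phi_even, Phi_even, r_eq a b ha hb, r_eq a b ha hb, h]
  have s1 := jN_succ a b ha hb (2*k)
  have s2 := jN_succ a b ha hb (2*k+1)
  have hN := jN_pos a b ha hb (2*k)
  have e : 2 * (k + 1) = 2 * k + 1 + 1 := by ring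
  have e' : 2 * k + 1 - 1 = 2 * k := by omega
  rw [e, e', s2, s1]
  unfold jc
  push_cast
  generalize jI a b x (jacobiMonic a b (2 * k + 1 + 1)) = X
  generalize jI a b x (jacobiMonic a b (2 * k)) = Y
  generalize jacobiNorm a b (2 * k) = H at *
  have hk : (0:ℝ) ≤ k := by positivity
  generalize (k:ℝ) = κ at *
  have c1 : 4 * (2 * κ + 1 + 1) * (2 * κ + 1 + 1 + a) * (2 * κ + 1 + 1 + b) * (a + b + (2 * κ + 1 + 1)) /
      ((a + b + 2 * (2 * κ + 1 + 1) - 1) * (a + b + 2 * (2 * κ + 1 + 1)) * (a + b + 2 * (2 * κ + 1 + 1) + 1) * (a + b + 2 * (2 * κ + 1 + 1) + 2))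
      = 8 * (κ + 1) * (2 * κ + 2 + a) * (2 * κ + 2 + b) * (a + b + 2 * κ + 2) /
      ((a + b + 4 * κ + 3) * (a + b + 4 * κ + 4) * (a + b + 4 * κ + 5) * (a + b + 4 * κ + 6)) := by
    congr 1 <;> ring
  have c2 : 4 * (2 * κ + 1) * (2 * κ + 1 + a) * (2 * κ + 1 + b) * (a + b + (2 * κ + 1)) /
      ((a + b + 2 * (2 * κ + 1) - 1) * (a + b + 2 * (2 * κ + 1)) * (a + b + 2 * (2 * κ + 1) + 1) * (a + b + 2 * (2 * κ + 1) + 2))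
      = 4 * (2 * κ + 1) * (2 * κ + 1 + a) * (2 * κ + 1 + b) * (a + b + 2 * κ + 1) /
      ((a + b + 4 * κ + 1) * (a + b + 4 * κ + 2) * (a + b + 4 * κ + 3) * (a + b + 4 * κ + 4)) := by
    congr 1 <;> ring
  rw [c1, c2]
  have d1 : a + b + 2 * (2 * κ + 1) + 3 = a + b + 4 * κ + 5 := by ring
  have d2 : a + b + 2 * (2 * κ + 1) + 2 = a + b + 4 * κ + 4 := by ring
  have d3 : a + b + 2 * (2 * κ + 1) + 1 = a + b + 4 * κ + 3 := by ring
  have d4 : a + b + 2 * (2 * κ) + 3 = a + b + 4 * κ + 3 := by ring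
  have d5 : a + b + 2 * (2 * κ) + 2 = a + b + 4 * κ + 2 := by ring
  have d6 : a + b + 2 * (2 * κ) + 1 = a + b + 4 * κ + 1 := by ring
  have d7 : a + b + 4 * (κ + 1) + 2 = a + b + 4 * κ + 6 := by ring
  have d8 : a + b + (2 * κ + 1) + 1 = a + b + 2 * κ + 2 := by ring
  have d9 : a + (2 * κ + 1) + 1 = 2 * κ + 2 + a := by ring
  have d10 : b + (2 * κ + 1) + 1 = 2 * κ + 2 + b := by ring
  have d11 : a + 2 * κ + 1 = 2 * κ + 1 + a := by ring
  have d12 : b + 2 * κ + 1 = 2 * κ + 1 + b := by ring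
  have d13 : 2 * κ + 1 + 1 = 2 * (κ + 1) := by ring
  rw [d1, d2, d3, d4, d5, d6, d7, d8, d9, d10, d13]
  have d15 : (a + b + 2 * κ + 1) ≠ 0 := by positivity
  have q1 : (a + b + 4 * κ + 1) ≠ 0 := by positivity
  have q2 : (a + b + 4 * κ + 2) ≠ 0 := by positivity
  have q3 : (a + b + 4 * κ + 3) ≠ 0 := by positivity
  have q4 : (a + b + 4 * κ + 4) ≠ 0 := by positivity
  have q5 : (a + b + 4 * κ + 5) ≠ 0 := by positivity
  have q6 : (a + b + 4 * κ + 6) ≠ 0 := by positivity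
  have q7 : (a + b + 2 * κ + 2) ≠ 0 := by positivity
  have q8 : (2 * κ + 2 + a) ≠ 0 := by positivity
  have q9 : (2 * κ + 2 + b) ≠ 0 := by positivity
  have q10 : (2 * κ + 1 + a) ≠ 0 := by positivity
  have q11 : (2 * κ + 1 + b) ≠ 0 := by positivity
  have q12 : (2 * κ + 1) ≠ 0 := by positivity
  have q13 : (κ + 1) ≠ 0 := by positivity
  rw [d11, d12]
  field_simp
  ring

lemma joe_aux (a b : ℝ) (ha : 0 < a) (hb : 0 < b) (x y : ℝ) (hx : x ∈ Set.Ioo (-1 : ℝ) 1) (m : ℕ) :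
    ∑ k ∈ range (m + 1), (wJOE a b y / rJOE a b k) *
        (PhiJOE a b (2 * k) x * qJOE a b (2 * k + 1) y -
         PhiJOE a b (2 * k + 1) x * qJOE a b (2 * k) y)
      = jW a b x * wJOE a b y *
          ∑ l ∈ range (2 * m + 1), jacobiMonic a b l x * jacobiMonic a b l y / jacobiNorm a b l
        + 1 / rJOE a b m * wJOE a b y * jacobiMonic a b (2 * m + 1) y * PhiJOE a b (2 * m) x := by
  induction m with
  | zero =>
    have h := Phi_odd a b ha hb x hx 0
    have hq := q_odd a b 0 y
    have hc : jc a b ((2 * 0 : ℕ):ℝ) = 0 := by simp [jc]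
    rw [hc] at hq
    simp only [zero_add, sum_range_one, hq, q_even]
    simp only [mul_zero, zero_add, sum_range_one] at *
    linear_combination - wJOE a b y * jacobiMonic a b 0 y * h
  | succ m ih =>
    rw [sum_range_succ, ih, show 2 * (m + 1) + 1 = (2 * m + 1) + 1 + 1 by ring, sum_range_succ _ (2 * m + 1 + 1),
      sum_range_succ _ (2 * m + 1)]
    have h := Phi_odd a b ha hb x hx (m+1)
    have h2 := odd_rel a b ha hb x hx m
    have hq := q_odd a b (m+1) y
    rw [q_even]
    rw [show 2 * (m + 1) + 1 = (2 * m + 1) + 1 + 1 by ring] at hq h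
    rw [show 2 * (m + 1) - 1 = 2 * m + 1 by omega] at hq
    rw [hq]
    rw [show 2 * (m + 1) = 2 * m + 1 + 1 by ring] at *
    linear_combination - wJOE a b y * jacobiMonic a b (2*m+1+1) y * h - wJOE a b y * jacobiMonic a b (2*m+1) y * h2

/-- Closed-form summation of the Jacobi orthogonal ensemble kernel `S̃₁(x,y)`
for `N` even. -/
theorem joe_kernel_summation (a b : ℝ) (ha : 0 < a) (hb : 0 < b)
    (N : ℕ) (hN : 2 ≤ N) (hNeven : Even N)
    (x y : ℝ) (hx : x ∈ Set.Ioo (-1 : ℝ) 1) (hy : y ∈ Set.Ioo (-1 : ℝ) 1) :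
    ∑ k ∈ range (N / 2), (wJOE a b y / rJOE a b k) *
        (PhiJOE a b (2 * k) x * qJOE a b (2 * k + 1) y -
         PhiJOE a b (2 * k + 1) x * qJOE a b (2 * k) y)
      = (1 - x) ^ ((a + 1) / 2) * (1 + x) ^ ((b + 1) / 2) *
          (1 - y) ^ ((a - 1) / 2) * (1 + y) ^ ((b - 1) / 2) *
          ∑ l ∈ range (N - 1), jacobiMonic a b l x * jacobiMonic a b l y / jacobiNorm a b l
        + ((2 * (N : ℝ) - 2 + a + b) / (2 * jacobiNorm a b (N - 2))) *
            wJOE a b y * jacobiMonic a b (N - 1) y *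
            ((1 / 2) * ∫ t in Set.Ioo (-1 : ℝ) 1,
              Real.sign (x - t) * wJOE a b t * jacobiMonic a b (N - 2) t) := by
  obtain ⟨M, hM⟩ := hNeven
  obtain ⟨m, rfl⟩ : ∃ m, M = m + 1 := ⟨M - 1, by omega⟩
  subst hM
  have h := joe_aux a b ha hb x y hx m
  rw [show (m + 1 + (m + 1)) / 2 = m + 1 by omega, show (m + 1 + (m + 1)) - 1 = 2 * m + 1 by omega,
    show (m + 1 + (m + 1)) - 2 = 2 * m by omega, h, r_eq a b ha hb m, Phi_even]
  unfold jI
  have e : ∀ t, Real.sign (x - t) * wJOE a b t * jacobiMonic a b (2 * m) t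
      = Real.sign (x - t) * jacobiMonic a b (2 * m) t * wJOE a b t := by intro t; ring
  simp only [e]
  rw [show (2 * ((m + 1 + (m + 1) : ℕ) : ℝ) - 2 + a + b) = a + b + 4 * m + 2 by push_cast; ring]
  unfold jW
  congr 1
  simp only [wJOE]
  ring
end

section
/- Let a, b > 0 be real and let N ≥ 1 be a natural number. Define the weight w̃(t) = (1−t)^{(a+1)/2}(1+t)^{(b+1)/2} on (−1,1), the polynomials q̃_{2m+1}(x) = p_{2m+1}(x) and q̃_{2m}(x) = 2^{6m} m! [Γ(a/2+b/2+m+1)Γ(a/2+m+1)Γ(b/2+m+1)/Γ(a+b+4m+2)]·Σ_{j=0}^{m} [Γ(a+b+4j+2)/(j!·2^{6j}·Γ(a/2+b/2+j+1)Γ(a/2+j+1)Γ(b/2+j+1))]·p_{2j}(x), and the normalizations r̃_m = 2^{a+b+4m+2}Γ(2m+2)Γ(a+2m+2)Γ(b+2m+2)Γ(a+b+2m+2)/(Γ(a+b+4m+2)Γ(a+b+4m+4)), where p_k are the monic Jacobi polynomials with parameters a, b and squared norms h_k. Define S̃₄(x,y) = Σ_{m=0}^{N−1} (w̃(x)/(2r̃_m))·(q̃_{2m}(x)·(d/dy)[w̃(y)·q̃_{2m+1}(y)]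 − q̃_{2m+1}(x)·(d/dy)[w̃(y)·q̃_{2m}(y)]). Then for all x, y ∈ (−1, 1): S̃₄(x,y) = (1/2)·(1−x)^{(a+1)/2}(1+x)^{(b+1)/2}(1−y)^{(a−1)/2}(1+y)^{(b−1)/2} Σ_{l=0}^{2N−1} p_l(x)p_l(y)/h_l − ((4N+a+b)/(4h_{2N−1}))·(1−y)^{(a−1)/2}(1+y)^{(b−1)/2}·p_{2N}(y)·∫_x^{1} (1−t)^{(a−1)/2}(1+t)^{(b−1)/2}·p_{2N−1}(t) dt. -/
open MeasureTheory Finset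

/-- The weight `w̃(t) = (1−t)^{(a+1)/2}(1+t)^{(b+1)/2}`. -/
noncomputable def wJSE (a b t : ℝ) : ℝ := (1 - t) ^ ((a + 1) / 2) * (1 + t) ^ ((b + 1) / 2)

/-- `q̃_{2m+1} = p_{2m+1}`, and `q̃_{2m}` the explicit combination of the even
monic Jacobi polynomials. -/
noncomputable def qJSE (a b : ℝ) (j : ℕ) (x : ℝ) : ℝ :=
  if j % 2 = 1 then jacobiMonic a b j x
  else 2 ^ (3 * j) * (Nat.factorial (j / 2)) *
    (Real.Gamma (a / 2 + b / 2 + (j / 2 : ℕ) + 1) * Real.Gamma (a / 2 + (j / 2 : ℕ) + 1) *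
      Real.Gamma (b / 2 + (j / 2 : ℕ) + 1) / Real.Gamma (a + b + 2 * (j : ℝ) + 2)) *
    ∑ i ∈ range (j / 2 + 1),
      (Real.Gamma (a + b + 4 * (i : ℝ) + 2) /
        ((Nat.factorial i) * 2 ^ (6 * i) * Real.Gamma (a / 2 + b / 2 + (i : ℝ) + 1) *
          Real.Gamma (a / 2 + (i : ℝ) + 1) * Real.Gamma (b / 2 + (i : ℝ) + 1)))
        * jacobiMonic a b (2 * i) x

/-- The normalizations `r̃_m`. -/
noncomputable def rJSE (a b : ℝ) (m : ℕ) : ℝ :=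
  2 ^ (a + b + 4 * (m : ℝ) + 2) * Real.Gamma (2 * (m : ℝ) + 2) *
    Real.Gamma (a + 2 * (m : ℝ) + 2) * Real.Gamma (b + 2 * (m : ℝ) + 2) *
    Real.Gamma (a + b + 2 * (m : ℝ) + 2) /
    (Real.Gamma (a + b + 4 * (m : ℝ) + 2) * Real.Gamma (a + b + 4 * (m : ℝ) + 4))

/-- The Jacobi symplectic ensemble kernel `S̃₄(x,y)`. -/
noncomputable def S4JSE (a b : ℝ) (N : ℕ) (x y : ℝ) : ℝ :=
  ∑ m ∈ range N, (wJSE a b x / (2 * rJSE a b m)) *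
    (qJSE a b (2 * m) x * deriv (fun t => wJSE a b t * qJSE a b (2 * m + 1) t) y -
     qJSE a b (2 * m + 1) x * deriv (fun t => wJSE a b t * qJSE a b (2 * m) t) y)


namespace JSEaux

/-- Reciprocal Gamma. -/
noncomputable def G (z : ℝ) : ℝ := (Real.Gamma z)⁻¹

lemma G_rec (z : ℝ) : G z = z * G (z + 1) := by
  unfold G
  by_cases hz : z = 0
  · subst hz; simp [Real.Gamma_zero]
  · rw [Real.Gamma_add_one hz, mul_inv, ← mul_assoc, mul_inv_cancel₀ hz, one_mul]

lemma G_nat (n : ℕ) : G ((n : ℝ) + 1) = ((Nat.factorial n : ℕ) : ℝ)⁻¹ := by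
  unfold G; rw [Real.Gamma_nat_eq_factorial]

lemma G_zero : G 0 = 0 := by simp [G, Real.Gamma_zero]

lemma G_neg_one : G (-1) = 0 := by rw [G_rec]; norm_num [G_zero]

/-- Coefficients. -/
noncomputable def T (a b n s : ℝ) : ℝ :=
  G (a + s + 1) * G (s + 1) * G (n - s + 1) * G (n - s + b + 1)

lemma T_id (a b n s : ℝ) :
    (a + b + 2 * n + 1) * ((2 * s + a + 1) * T a b n s
        + (2 * (n - s + 1) + b + 1) * T a b n (s - 1))
      = (n + 1) * (a + b + n + 1) * (n + a + 1) * (n + b + 1) * T a b (n + 1) s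
        - (T a b (n - 1) s - 2 * T a b (n - 1) (s - 1) + T a b (n - 1) (s - 2)) := by
  have e : ∀ z w : ℝ, w = z + 1 → G z = z * G w := by
    rintro z w rfl; exact G_rec z
  unfold T
  have a1 : G (a + (s - 1) + 1) = (a + s) * G (a + s + 1) := by
    rw [e (a + (s - 1) + 1) (a + s + 1) (by ring)]; ring
  have a2 : G (a + (s - 2) + 1) = (a + s - 1) * ((a + s) * G (a + s + 1)) := by
    rw [e (a + (s - 2) + 1) (a + (s - 1) + 1) (by ring), a1]; ring
  have b1 : G ((s - 1) + 1) = s * G (s + 1) := by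
    rw [e ((s - 1) + 1) (s + 1) (by ring)]; ring
  have b2 : G ((s - 2) + 1) = (s - 1) * (s * G (s + 1)) := by
    rw [e ((s - 2) + 1) ((s - 1) + 1) (by ring), b1]; ring
  have c1 : G (n - s + 1) = (n - s + 1) * G (n - s + 2) := e _ _ (by ring)
  have c2 : G (n - (s - 1) + 1) = G (n - s + 2) := by congr 1; ring
  have c3 : G (n + 1 - s + 1) = G (n - s + 2) := by congr 1; ring
  have c4 : G (n - 1 - s + 1) = (n - s) * ((n - s + 1) * G (n - s + 2)) := by
    rw [e (n - 1 - s + 1) (n - s + 1) (by ring), c1]; ring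
  have c5 : G (n - 1 - (s - 1) + 1) = (n - s + 1) * G (n - s + 2) := by
    rw [← c1]; congr 1; ring
  have c6 : G (n - 1 - (s - 2) + 1) = G (n - s + 2) := by congr 1; ring
  have d1 : G (n - s + b + 1) = (n - s + b + 1) * G (n - s + b + 2) := e _ _ (by ring)
  have d2 : G (n - (s - 1) + b + 1) = G (n - s + b + 2) := by congr 1; ring
  have d3 : G (n + 1 - s + b + 1) = G (n - s + b + 2) := by congr 1; ring
  have d4 : G (n - 1 - s + b + 1) = (n - s + b) * ((n - s + b + 1) * G (n - s + b + 2)) := by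
    rw [e (n - 1 - s + b + 1) (n - s + b + 1) (by ring), d1]; ring
  have d5 : G (n - 1 - (s - 1) + b + 1) = (n - s + b + 1) * G (n - s + b + 2) := by
    rw [← d1]; congr 1; ring
  have d6 : G (n - 1 - (s - 2) + b + 1) = G (n - s + b + 2) := by congr 1; ring
  rw [a1, a2, b1, b2, c1, c2, c3, c4, c5, c6, d1, d2, d3, d4, d5, d6]
  ring

/-- Homogeneous sum. -/
noncomputable def H (a b : ℝ) (n : ℕ) (u v : ℝ) : ℝ :=
  ∑ s ∈ range (n + 1), T a b n s * (u ^ s * v ^ (n - s))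

lemma jacobiP_eq (a b : ℝ) (n : ℕ) (x : ℝ) :
    jacobiP a b n x = Real.Gamma (n + a + 1) * Real.Gamma (n + b + 1) *
      H a b n ((x - 1) / 2) ((x + 1) / 2) := by
  unfold jacobiP H
  rw [Finset.mul_sum]
  refine Finset.sum_congr rfl fun s hs => ?_
  have hsn : s ≤ n := by simpa [Nat.lt_succ_iff] using hs
  unfold T
  rw [G_nat s, show ((n : ℝ) - s + 1) = ((n - s : ℕ) : ℝ) + 1 by rw [Nat.cast_sub hsn], G_nat]
  unfold G
  rw [show (n : ℝ) + b - s + 1 = n - s + b + 1 by ring]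
  simp only [div_eq_mul_inv, mul_inv]
  ring

lemma T_neg (a b n : ℝ) : T a b n (-1) = 0 := by simp [T, G_zero]
lemma T_neg2 (a b n : ℝ) : T a b n (-2) = 0 := by
  unfold T; rw [show (-2 : ℝ) + 1 = -1 by norm_num, G_neg_one]; simp
lemma T_top (a b n : ℝ) : T a b n (n + 1) = 0 := by
  unfold T; rw [show n - (n + 1) + 1 = 0 by ring, G_zero]; simp
lemma T_top2 (a b n : ℝ) : T a b n (n + 2) = 0 := by
  unfold T; rw [show n - (n + 2) + 1 = -1 by ring, G_neg_one]; simp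

lemma shift0 (n : ℕ) (f : ℝ → ℝ) (hf : f (n + 1) = 0) (u v : ℝ) :
    ∑ s ∈ range (n + 2), f s * (u ^ s * v ^ (n + 1 - s))
      = v * ∑ s ∈ range (n + 1), f s * (u ^ s * v ^ (n - s)) := by
  rw [Finset.sum_range_succ]
  push_cast
  rw [hf, zero_mul, add_zero, Finset.mul_sum]
  refine Finset.sum_congr rfl fun s hs => ?_
  have hsn : s ≤ n := by simpa [Nat.lt_succ_iff] using hs
  rw [Nat.succ_sub hsn, pow_succ]; ring

lemma shift1 (n : ℕ) (f : ℝ → ℝ) (hf : f (-1) = 0) (u v : ℝ) :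
    ∑ s ∈ range (n + 2), f (s - 1) * (u ^ s * v ^ (n + 1 - s))
      = u * ∑ s ∈ range (n + 1), f s * (u ^ s * v ^ (n - s)) := by
  rw [Finset.sum_range_succ']
  simp only [Nat.cast_zero, zero_sub, hf, zero_mul, add_zero, Finset.mul_sum]
  refine Finset.sum_congr rfl fun s hs => ?_
  rw [Nat.add_sub_add_right, pow_succ]
  push_cast
  rw [add_sub_cancel_right]; ring

/-- the operator in homogeneous form -/
lemma key (a b : ℝ) (n : ℕ) (u v : ℝ) :
    (a + b + 2 * n + 1) *
      (∑ s ∈ range (n + 1), T a b n s * ((2 * s + a + 1) * (v * (u ^ s * v ^ (n - s)))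
        + (2 * (n - s) + b + 1) * (u * (u ^ s * v ^ (n - s)))))
    = (n + 1) * (a + b + n + 1) * (n + a + 1) * (n + b + 1) * H a b (n + 1) u v
      - ∑ s ∈ range (n + 2), (T a b (n - 1) s - 2 * T a b (n - 1) (s - 1) + T a b (n - 1) (s - 2)) *
          (u ^ s * v ^ (n + 1 - s)) := by
  have h0 := shift0 n (fun s => (2 * s + a + 1) * T a b n s) (by simp [T_top]) u v
  have h1 := shift1 n (fun s => (2 * (n - s) + b + 1) * T a b n s) (by simp [T_neg]) u v
  have hL : (∑ s ∈ range (n + 1), T a b n s * ((2 * s + a + 1) * (v * (u ^ s * v ^ (n - s)))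
        + (2 * (n - s) + b + 1) * (u * (u ^ s * v ^ (n - s)))))
      = ∑ s ∈ range (n + 2), ((2 * s + a + 1) * T a b n s
        + (2 * (n - s + 1) + b + 1) * T a b n (s - 1)) * (u ^ s * v ^ (n + 1 - s)) := by
    simp only [add_mul (_ * _) (_ * _)]
    rw [Finset.sum_add_distrib, h0]
    have : ∀ s : ℕ, (2 * ((n : ℝ) - s + 1) + b + 1) = (2 * (n - ((s : ℝ) - 1)) + b + 1) := by
      intro s; ring
    simp only [this]
    rw [h1, Finset.mul_sum, Finset.mul_sum, ← Finset.sum_add_distrib]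
    refine Finset.sum_congr rfl fun s hs => ?_
    ring
  rw [hL, H, Finset.mul_sum, Finset.mul_sum, ← Finset.sum_sub_distrib]
  refine Finset.sum_congr rfl fun s hs => ?_
  have := T_id a b n s
  push_cast
  rw [← mul_assoc, this]; ring

lemma second_zero (a b : ℝ) (u v : ℝ) :
   ∑ s ∈ range (0 + 2), (T a b ((0 : ℕ) - 1) s - 2 * T a b ((0 : ℕ) - 1) (s - 1)
      + T a b ((0 : ℕ) - 1) (s - 2)) * (u ^ s * v ^ (0 + 1 - s)) = 0 := by
  have h1 : T a b (-1) 0 = 0 := by simpa using T_top a b (-1)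
  have h2 : T a b (-1) 1 = 0 := by
    have := T_top2 a b (-1); norm_num at this; exact this
  simp [Finset.sum_range_succ, h1, h2, T_neg, T_neg2]
  norm_num [T_neg]

lemma second_succ (a b : ℝ) (m : ℕ) (u v : ℝ) :
   ∑ s ∈ range (m + 1 + 2), (T a b ((m + 1 : ℕ) - 1) s - 2 * T a b ((m + 1 : ℕ) - 1) (s - 1)
      + T a b ((m + 1 : ℕ) - 1) (s - 2)) * (u ^ s * v ^ (m + 1 + 1 - s))
      = (v - u) ^ 2 * H a b m u v := by
  push_cast
  rw [add_sub_cancel_right]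
  have e0 : ∑ s ∈ range (m + 1 + 2), T a b m s * (u ^ s * v ^ (m + 1 + 1 - s))
      = v * (v * H a b m u v) := by
    rw [shift0 (m + 1) (T a b m) (by push_cast; rw [add_assoc]; norm_num [T_top2]),
      shift0 m (T a b m) (T_top a b m)]; rfl
  have e1 : ∑ s ∈ range (m + 1 + 2), T a b m (s - 1) * (u ^ s * v ^ (m + 1 + 1 - s))
      = u * (v * H a b m u v) := by
    rw [shift1 (m + 1) (T a b m) (T_neg a b m), shift0 m (T a b m) (T_top a b m)]; rfl
  have e2 : ∑ s ∈ range (m + 1 + 2), T a b m (s - 2) * (u ^ s * v ^ (m + 1 + 1 - s))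
      = u * (u * H a b m u v) := by
    have h := shift1 (m + 1) (fun s => T a b m (s - 1))
      (by norm_num [T_neg2]) u v
    rw [shift1 m (T a b m) (T_neg a b m)] at h
    rw [show H a b m u v = ∑ s ∈ range (m + 1), T a b m s * (u ^ s * v ^ (m - s)) from rfl, ← h]
    refine Finset.sum_congr rfl fun s hs => ?_
    simp only [sub_sub]; norm_num
  have : ∀ s : ℕ, (T a b m s - 2 * T a b m (s - 1) + T a b m (s - 2)) *
        (u ^ s * v ^ (m + 1 + 1 - s)) = T a b m s * (u ^ s * v ^ (m + 1 + 1 - s))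
        - 2 * (T a b m (s - 1) * (u ^ s * v ^ (m + 1 + 1 - s)))
        + T a b m (s - 2) * (u ^ s * v ^ (m + 1 + 1 - s)) := by intro s; ring
  simp only [this]
  rw [Finset.sum_add_distrib, Finset.sum_sub_distrib, ← Finset.mul_sum, e0, e1, e2]
  ring

lemma mono_deriv (s r : ℕ) (x : ℝ) :
    ∃ d, HasDerivAt (fun x : ℝ => ((x - 1) / 2) ^ s * ((x + 1) / 2) ^ r) d x ∧
      (1 - x ^ 2) * d = -2 * (s * ((x + 1) / 2 * (((x - 1) / 2) ^ s * ((x + 1) / 2) ^ r))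
        + r * ((x - 1) / 2 * (((x - 1) / 2) ^ s * ((x + 1) / 2) ^ r))) := by
  have h1 : HasDerivAt (fun x : ℝ => ((x - 1) / 2) ^ s) _ x :=
    (((hasDerivAt_id x).sub_const 1).div_const 2).pow s
  have h2 : HasDerivAt (fun x : ℝ => ((x + 1) / 2) ^ r) _ x :=
    (((hasDerivAt_id x).add_const 1).div_const 2).pow r
  refine ⟨_, h1.mul h2, ?_⟩
  simp only [id]
  have k : ∀ (n : ℕ) (z : ℝ), (n : ℝ) * z ^ n = z * (n * z ^ (n - 1)) := by
    intro n z
    cases n with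
    | zero => simp
    | succ n => simp [pow_succ]; ring
  have k1 := k s ((x - 1) / 2)
  have k2 := k r ((x + 1) / 2)
  linear_combination (-1) * (2 * ((x + 1) / 2)) * (((x + 1) / 2) ^ r) * (-k1) - (2 * ((x - 1) / 2)) * (((x - 1) / 2) ^ s) * (-k2)

/-- derivative statement -/
lemma H_deriv (a b : ℝ) (n : ℕ) (x : ℝ) :
    ∃ d, HasDerivAt (fun x : ℝ => H a b n ((x - 1) / 2) ((x + 1) / 2)) d x ∧
      (1 - x ^ 2) * d + ((b - a) / 2 - (a + b + 2) / 2 * x) * H a b n ((x - 1) / 2) ((x + 1) / 2)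
       = - (∑ s ∈ range (n + 1), T a b n s *
        ((2 * s + a + 1) * ((x + 1) / 2 * (((x - 1) / 2) ^ s * ((x + 1) / 2) ^ (n - s)))
        + (2 * (n - s) + b + 1) * ((x - 1) / 2 * (((x - 1) / 2) ^ s * ((x + 1) / 2) ^ (n - s))))) := by
  choose d hd hd2 using fun s : ℕ => mono_deriv s (n - s) x
  refine ⟨∑ s ∈ range (n + 1), T a b n s * d s, ?_, ?_⟩
  · unfold H
    exact HasDerivAt.fun_sum fun s _ => (hd s).const_mul _
  · unfold H
    rw [Finset.mul_sum, Finset.mul_sum, ← Finset.sum_neg_distrib, ← Finset.sum_add_distrib]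
    refine Finset.sum_congr rfl fun s hs => ?_
    have hsn : s ≤ n := by simpa [Nat.lt_succ_iff] using hs
    have := hd2 s
    rw [Nat.cast_sub hsn] at this
    linear_combination T a b n s * this

lemma P_zero (a b : ℝ) (ha : 0 < a) (hb : 0 < b) (x : ℝ) :
    ∃ d, HasDerivAt (jacobiP a b 0) d x ∧
      (1 - x ^ 2) * d + ((b - a) / 2 - (a + b + 2) / 2 * x) * jacobiP a b 0 x
        = - jacobiP a b 1 x := by
  obtain ⟨d, hd, h⟩ := H_deriv a b 0 x
  refine ⟨_, (hd.const_mul (Real.Gamma ((0 : ℕ) + a + 1) * Real.Gamma ((0 : ℕ) + b + 1))).congr_of_eventuallyEq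
    (Filter.Eventually.of_forall fun x => jacobiP_eq a b 0 x), ?_⟩
  have hk := key a b 0 ((x - 1) / 2) ((x + 1) / 2)
  rw [second_zero] at hk
  rw [jacobiP_eq, jacobiP_eq]
  have g1 : Real.Gamma ((1 : ℕ) + a + 1) = (a + 1) * Real.Gamma ((0 : ℕ) + a + 1) := by
    simp only [Nat.cast_one, Nat.cast_zero, zero_add]
    rw [← Real.Gamma_add_one (by positivity)]
    congr 1; ring
  have g2 : Real.Gamma ((1 : ℕ) + b + 1) = (b + 1) * Real.Gamma ((0 : ℕ) + b + 1) := by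
    simp only [Nat.cast_one, Nat.cast_zero, zero_add]
    rw [← Real.Gamma_add_one (by positivity)]
    congr 1; ring
  rw [g1, g2]
  have hne : a + b + 1 ≠ 0 := by positivity
  apply mul_left_cancel₀ hne
  simp only [Nat.cast_zero] at *
  norm_num at hk
  norm_num at h
  norm_num
  linear_combination (a + b + 1) * (Real.Gamma (a + 1) * Real.Gamma (b + 1)) * h
    - (Real.Gamma (a + 1) * Real.Gamma (b + 1)) * hk

lemma P_succ (a b : ℝ) (ha : 0 < a) (hb : 0 < b) (m : ℕ) (x : ℝ) :
    ∃ d, HasDerivAt (jacobiP a b (m + 1)) d x ∧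
      (a + b + 2 * m + 3) *
      ((1 - x ^ 2) * d + ((b - a) / 2 - (a + b + 2) / 2 * x) * jacobiP a b (m + 1) x)
        = - ((m + 2) * (a + b + m + 2) * jacobiP a b (m + 2) x)
          + (m + 1 + a) * (m + 1 + b) * jacobiP a b m x := by
  obtain ⟨d, hd, h⟩ := H_deriv a b (m + 1) x
  refine ⟨_, (hd.const_mul (Real.Gamma ((m + 1 : ℕ) + a + 1) * Real.Gamma ((m + 1 : ℕ) + b + 1))).congr_of_eventuallyEq
    (Filter.Eventually.of_forall fun x => jacobiP_eq a b (m + 1) x), ?_⟩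
  have hk := key a b (m + 1) ((x - 1) / 2) ((x + 1) / 2)
  rw [second_succ] at hk
  rw [jacobiP_eq, jacobiP_eq, jacobiP_eq]
  have g : ∀ c : ℝ, 0 < c → ∀ k : ℕ, Real.Gamma ((k + 1 : ℕ) + c + 1) = (k + c + 1) * Real.Gamma (k + c + 1) := by
    intro c hc k
    rw [← Real.Gamma_add_one (by positivity)]
    congr 1; push_cast; ring
  rw [g a ha (m + 1), g b hb (m + 1), g a ha m, g b hb m]
  rw [show (x + 1) / 2 - (x - 1) / 2 = 1 by ring] at hk
  push_cast at *
  linear_combination (a + b + 2 * m + 3) * ((m + a + 1) * Real.Gamma (m + a + 1) * ((m + b + 1) * Real.Gamma (m + b + 1))) * h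
    - ((m + a + 1) * Real.Gamma (m + a + 1) * ((m + b + 1) * Real.Gamma (m + b + 1))) * hk

lemma Gam (z w : ℝ) (hz : 0 < z) (h : w = z + 1) : Real.Gamma w = z * Real.Gamma z := by
  rw [h, Real.Gamma_add_one hz.ne']

/-- leading normalisation -/
noncomputable def kap (a b : ℝ) (k : ℕ) : ℝ :=
  2 ^ k * (Nat.factorial k) * Real.Gamma (a + b + (k : ℝ) + 1) /
    Real.Gamma (a + b + 2 * (k : ℝ) + 1)

lemma kap_succ (a b : ℝ) (ha : 0 < a) (hb : 0 < b) (k : ℕ) :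
    kap a b (k + 1) = kap a b k * (2 * (k + 1) * (a + b + k + 1)) /
      ((a + b + 2 * k + 1) * (a + b + 2 * k + 2)) := by
  unfold kap
  have g1 : Real.Gamma (a + b + ((k + 1 : ℕ) : ℝ) + 1) = _ :=
    Gam (a + b + k + 1) _ (by positivity) (by push_cast; ring)
  have g2 : Real.Gamma (a + b + 2 * ((k + 1 : ℕ) : ℝ) + 1) = _ :=
    Gam (a + b + 2 * k + 2) _ (by positivity) (by push_cast; ring)
  have g3 : Real.Gamma (a + b + 2 * (k : ℝ) + 2) = _ :=
    Gam (a + b + 2 * k + 1) _ (by positivity) (by ring)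
  rw [g1, g2, g3, Nat.factorial_succ]
  have p1 : Real.Gamma (a + b + 2 * (k : ℝ) + 1) ≠ 0 := (Real.Gamma_pos_of_pos (by positivity)).ne'
  have p2 : a + b + 2 * (k : ℝ) + 1 ≠ 0 := by positivity
  have p3 : a + b + 2 * (k : ℝ) + 2 ≠ 0 := by positivity
  push_cast
  field_simp
  ring

lemma norm_pos (a b : ℝ) (ha : 0 < a) (hb : 0 < b) (k : ℕ) : 0 < jacobiNorm a b k := by
  unfold jacobiNorm
  have h1 := Real.Gamma_pos_of_pos (show 0 < (k : ℝ) + 1 by positivity)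
  have h2 := Real.Gamma_pos_of_pos (show 0 < a + b + (k : ℝ) + 1 by positivity)
  have h3 := Real.Gamma_pos_of_pos (show 0 < a + (k : ℝ) + 1 by positivity)
  have h4 := Real.Gamma_pos_of_pos (show 0 < b + (k : ℝ) + 1 by positivity)
  have h5 := Real.Gamma_pos_of_pos (show 0 < a + b + 2 * (k : ℝ) + 2 by positivity)
  have h6 := Real.Gamma_pos_of_pos (show 0 < a + b + 2 * (k : ℝ) + 1 by positivity)
  positivity

lemma norm_succ (a b : ℝ) (ha : 0 < a) (hb : 0 < b) (k : ℕ) :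
    jacobiNorm a b (k + 1) = jacobiNorm a b k *
      (4 * (k + 1) * (a + b + k + 1) * (a + k + 1) * (b + k + 1)) /
      ((a + b + 2 * k + 2) ^ 2 * (a + b + 2 * k + 3) * (a + b + 2 * k + 1)) := by
  unfold jacobiNorm
  have g0 : Real.Gamma (((k + 1 : ℕ) : ℝ) + 1) = _ :=
    Gam (k + 1) _ (by positivity) (by push_cast; ring)
  have g1 : Real.Gamma (a + b + ((k + 1 : ℕ) : ℝ) + 1) = _ :=
    Gam (a + b + k + 1) _ (by positivity) (by push_cast; ring)
  have ga : Real.Gamma (a + ((k + 1 : ℕ) : ℝ) + 1) = _ :=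
    Gam (a + k + 1) _ (by positivity) (by push_cast; ring)
  have gb : Real.Gamma (b + ((k + 1 : ℕ) : ℝ) + 1) = _ :=
    Gam (b + k + 1) _ (by positivity) (by push_cast; ring)
  have g2 : Real.Gamma (a + b + 2 * ((k + 1 : ℕ) : ℝ) + 1) = _ :=
    Gam (a + b + 2 * k + 2) _ (by positivity) (by push_cast; ring)
  have g4 : Real.Gamma (a + b + 2 * ((k + 1 : ℕ) : ℝ) + 2) = _ :=
    Gam (a + b + 2 * k + 3) _ (by positivity) (by push_cast; ring)
  have g5 : Real.Gamma (a + b + 2 * (k : ℝ) + 3) = _ :=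
    Gam (a + b + 2 * k + 2) _ (by positivity) (by ring)
  have g3 : Real.Gamma (a + b + 2 * (k : ℝ) + 2) = _ :=
    Gam (a + b + 2 * k + 1) _ (by positivity) (by ring)
  have e : (2 : ℝ) ^ (a + b + 1 + 2 * ((k + 1 : ℕ) : ℝ)) = 4 * 2 ^ (a + b + 1 + 2 * (k : ℝ)) := by
    rw [show a + b + 1 + 2 * ((k + 1 : ℕ) : ℝ) = (a + b + 1 + 2 * (k : ℝ)) + 2 by push_cast; ring,
      Real.rpow_add (by norm_num)]
    norm_num; ring
  rw [e, g0, g1, ga, gb, g2, g4, g5, g3]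
  have p1 : Real.Gamma (a + b + 2 * (k : ℝ) + 1) ≠ 0 := (Real.Gamma_pos_of_pos (by positivity)).ne'
  have p2 : a + b + 2 * (k : ℝ) + 1 ≠ 0 := by positivity
  have p3 : a + b + 2 * (k : ℝ) + 2 ≠ 0 := by positivity
  have p4 : a + b + 2 * (k : ℝ) + 3 ≠ 0 := by positivity
  field_simp

/-- coefficient -/
noncomputable def A (a b : ℝ) (k : ℕ) : ℝ := k + (a + b + 2) / 2

lemma A_pos (a b : ℝ) (ha : 0 < a) (hb : 0 < b) (k : ℕ) : 0 < A a b k := by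
  unfold A; positivity

/-- `q` is differentiable with `L q = r` at `x`. -/
def HasL (a b : ℝ) (q : ℝ → ℝ) (r x : ℝ) : Prop :=
  ∃ d, HasDerivAt q d x ∧ (1 - x ^ 2) * d + ((b - a) / 2 - (a + b + 2) / 2 * x) * q x = r

lemma p_zero (a b : ℝ) (ha : 0 < a) (hb : 0 < b) (x : ℝ) :
    HasL a b (jacobiMonic a b 0) (-A a b 0 * jacobiMonic a b 1 x) x := by
  obtain ⟨d, hd, h⟩ := P_zero a b ha hb x
  refine ⟨_, hd.const_mul (kap a b 0), ?_⟩
  change (1 - x ^ 2) * (kap a b 0 * d) +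
    ((b - a) / 2 - (a + b + 2) / 2 * x) * (kap a b 0 * jacobiP a b 0 x)
    = -A a b 0 * (kap a b 1 * jacobiP a b 1 x)
  have e := kap_succ a b ha hb 0
  rw [zero_add] at e
  rw [e]
  have p2 : a + b + 1 ≠ 0 := by positivity
  have p3 : a + b + 2 ≠ 0 := by positivity
  have : A a b 0 * (kap a b 0 * (2 * ((0 : ℕ) + 1) * (a + b + (0 : ℕ) + 1)) /
      ((a + b + 2 * (0 : ℕ) + 1) * (a + b + 2 * (0 : ℕ) + 2))) = kap a b 0 := by
    unfold A
    push_cast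
    simp only [mul_zero, add_zero, zero_add]
    field_simp
  linear_combination kap a b 0 * h + jacobiP a b 1 x * this

lemma p_succ (a b : ℝ) (ha : 0 < a) (hb : 0 < b) (k : ℕ) (x : ℝ) :
    HasL a b (jacobiMonic a b (k + 1)) (-A a b (k + 1) * jacobiMonic a b (k + 2) x +
      A a b k * jacobiNorm a b (k + 1) / jacobiNorm a b k * jacobiMonic a b k x) x := by
  obtain ⟨d, hd, h⟩ := P_succ a b ha hb k x
  refine ⟨_, hd.const_mul (kap a b (k + 1)), ?_⟩
  change (1 - x ^ 2) * (kap a b (k + 1) * d) +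
    ((b - a) / 2 - (a + b + 2) / 2 * x) * (kap a b (k + 1) * jacobiP a b (k + 1) x)
    = -A a b (k + 1) * (kap a b (k + 2) * jacobiP a b (k + 2) x) +
      A a b k * jacobiNorm a b (k + 1) / jacobiNorm a b k * (kap a b k * jacobiP a b k x)
  have hn := (norm_pos a b ha hb k).ne'
  have q1 : a + b + 2 * (k : ℝ) + 1 ≠ 0 := by positivity
  have q2 : a + b + 2 * (k : ℝ) + 2 ≠ 0 := by positivity
  have q3 : a + b + 2 * (k : ℝ) + 3 ≠ 0 := by positivity
  have q4 : a + b + 2 * (k : ℝ) + 4 ≠ 0 := by positivity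
  have c1 : A a b (k + 1) * kap a b (k + 2)
      = kap a b (k + 1) * ((k + 2) * (a + b + k + 2)) / (a + b + 2 * k + 3) := by
    rw [kap_succ a b ha hb (k + 1)]
    unfold A
    push_cast
    rw [show a + b + 2 * ((k : ℝ) + 1) + 1 = a + b + 2 * k + 3 by ring,
      show a + b + 2 * ((k : ℝ) + 1) + 2 = a + b + 2 * k + 4 by ring,
      show (k : ℝ) + 1 + (a + b + 2) / 2 = (a + b + 2 * k + 4) / 2 by ring]
    field_simp
    ring
  have c2 : A a b k * jacobiNorm a b (k + 1) / jacobiNorm a b k * kap a b k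
      = kap a b (k + 1) * ((k + 1 + a) * (k + 1 + b)) / (a + b + 2 * k + 3) := by
    rw [kap_succ a b ha hb k, norm_succ a b ha hb k]
    unfold A
    rw [show (k : ℝ) + (a + b + 2) / 2 = (a + b + 2 * k + 2) / 2 by ring]
    field_simp
    ring
  have h' : (1 - x ^ 2) * d + ((b - a) / 2 - (a + b + 2) / 2 * x) * jacobiP a b (k + 1) x
      = (- ((k + 2) * (a + b + k + 2) * jacobiP a b (k + 2) x)
          + (k + 1 + a) * (k + 1 + b) * jacobiP a b k x) / (a + b + 2 * k + 3) := by
    rw [eq_div_iff q3, ← h]; ring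
  linear_combination kap a b (k + 1) * h' + jacobiP a b (k + 2) x * c1 - jacobiP a b k x * c2

lemma HasL.add {a b : ℝ} {q1 q2 : ℝ → ℝ} {r1 r2 x : ℝ} (h1 : HasL a b q1 r1 x)
    (h2 : HasL a b q2 r2 x) (c : ℝ) :
    HasL a b (fun t => q1 t + c * q2 t) (r1 + c * r2) x := by
  obtain ⟨d1, hd1, e1⟩ := h1
  obtain ⟨d2, hd2, e2⟩ := h2
  exact ⟨_, hd1.add (hd2.const_mul c), by linear_combination e1 + c * e2⟩

/-- coefficients in `q` -/
noncomputable def cc (a b : ℝ) (i : ℕ) : ℝ :=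
  Real.Gamma (a + b + 4 * (i : ℝ) + 2) /
        ((Nat.factorial i) * 2 ^ (6 * i) * Real.Gamma (a / 2 + b / 2 + (i : ℝ) + 1) *
          Real.Gamma (a / 2 + (i : ℝ) + 1) * Real.Gamma (b / 2 + (i : ℝ) + 1))

lemma cc_pos (a b : ℝ) (ha : 0 < a) (hb : 0 < b) (k : ℕ) : 0 < cc a b k := by
  unfold cc
  have h2 := Real.Gamma_pos_of_pos (show 0 < a / 2 + b / 2 + (k : ℝ) + 1 by positivity)
  have h3 := Real.Gamma_pos_of_pos (show 0 < a / 2 + (k : ℝ) + 1 by positivity)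
  have h4 := Real.Gamma_pos_of_pos (show 0 < b / 2 + (k : ℝ) + 1 by positivity)
  have h5 := Real.Gamma_pos_of_pos (show 0 < a + b + 4 * (k : ℝ) + 2 by positivity)
  positivity

lemma q_odd (a b : ℝ) (m : ℕ) : qJSE a b (2 * m + 1) = jacobiMonic a b (2 * m + 1) := by
  funext x
  unfold qJSE
  rw [if_pos (by omega)]

lemma q_even (a b : ℝ) (m : ℕ) (x : ℝ) : qJSE a b (2 * m) x =
    (cc a b m)⁻¹ * ∑ i ∈ range (m + 1), cc a b i * jacobiMonic a b (2 * i) x := by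
  unfold qJSE
  rw [if_neg (by omega)]
  have e : 2 * m / 2 = m := by omega
  rw [e]
  unfold cc
  congr 1
  rw [inv_div]
  rw [show 3 * (2 * m) = 6 * m by ring,
    show a + b + 2 * ((2 * m : ℕ) : ℝ) + 2 = a + b + 4 * (m : ℝ) + 2 by push_cast; ring]
  ring

lemma cc_succ (a b : ℝ) (ha : 0 < a) (hb : 0 < b) (m : ℕ) :
    (cc a b (m + 1))⁻¹ * cc a b m = A a b (2 * m + 1) * jacobiNorm a b (2 * m + 2) /
      (A a b (2 * m) * jacobiNorm a b (2 * m + 1)) := by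
  have hn := (norm_pos a b ha hb (2 * m + 1)).ne'
  have hc := (cc_pos a b ha hb m).ne'
  have e : cc a b (m + 1) = cc a b m * ((a + b + 4 * m + 2) * (a + b + 4 * m + 3) *
      (a + b + 4 * m + 4) * (a + b + 4 * m + 5)) /
      (64 * (m + 1) * (a / 2 + b / 2 + m + 1) * (a / 2 + m + 1) * (b / 2 + m + 1)) := by
    unfold cc
    have g1 : Real.Gamma (a / 2 + b / 2 + ((m + 1 : ℕ) : ℝ) + 1) = _ :=
      Gam (a / 2 + b / 2 + m + 1) _ (by positivity) (by push_cast; ring)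
    have g2 : Real.Gamma (a / 2 + ((m + 1 : ℕ) : ℝ) + 1) = _ :=
      Gam (a / 2 + m + 1) _ (by positivity) (by push_cast; ring)
    have g3 : Real.Gamma (b / 2 + ((m + 1 : ℕ) : ℝ) + 1) = _ :=
      Gam (b / 2 + m + 1) _ (by positivity) (by push_cast; ring)
    have g4 : Real.Gamma (a + b + 4 * ((m + 1 : ℕ) : ℝ) + 2) = _ :=
      Gam (a + b + 4 * m + 5) _ (by positivity) (by push_cast; ring)
    have g5 : Real.Gamma (a + b + 4 * (m : ℝ) + 5) = _ :=
      Gam (a + b + 4 * m + 4) _ (by positivity) (by ring)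
    have g6 : Real.Gamma (a + b + 4 * (m : ℝ) + 4) = _ :=
      Gam (a + b + 4 * m + 3) _ (by positivity) (by ring)
    have g7 : Real.Gamma (a + b + 4 * (m : ℝ) + 3) = _ :=
      Gam (a + b + 4 * m + 2) _ (by positivity) (by ring)
    rw [g1, g2, g3, g4, g5, g6, g7, Nat.factorial_succ, show 6 * (m + 1) = 6 * m + 6 by ring, pow_add]
    have h2 := (Real.Gamma_pos_of_pos (show 0 < a / 2 + b / 2 + (m : ℝ) + 1 by positivity)).ne'
    have h3 := (Real.Gamma_pos_of_pos (show 0 < a / 2 + (m : ℝ) + 1 by positivity)).ne'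
    have h4 := (Real.Gamma_pos_of_pos (show 0 < b / 2 + (m : ℝ) + 1 by positivity)).ne'
    have k2 : a / 2 + b / 2 + (m : ℝ) + 1 ≠ 0 := by positivity
    have k3 : a / 2 + (m : ℝ) + 1 ≠ 0 := by positivity
    have k4 : b / 2 + (m : ℝ) + 1 ≠ 0 := by positivity
    push_cast
    generalize Real.Gamma (a / 2 + b / 2 + (m : ℝ) + 1) = X1 at *
    generalize Real.Gamma (a / 2 + (m : ℝ) + 1) = X2 at *
    generalize Real.Gamma (b / 2 + (m : ℝ) + 1) = X3 at *
    generalize a / 2 + b / 2 + (m : ℝ) + 1 = Y1 at *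
    generalize a / 2 + (m : ℝ) + 1 = Y2 at *
    generalize b / 2 + (m : ℝ) + 1 = Y3 at *
    field_simp
    norm_num
  rw [e, norm_succ a b ha hb (2 * m + 1)]
  unfold A
  push_cast
  rw [show 2 * (m : ℝ) + 1 + (a + b + 2) / 2 = (a + b + 4 * m + 4) / 2 by ring,
    show 2 * (m : ℝ) + (a + b + 2) / 2 = (a + b + 4 * m + 2) / 2 by ring,
    show a + b + 2 * (2 * (m : ℝ) + 1) + 2 = a + b + 4 * m + 4 by ring,
    show a + b + 2 * (2 * (m : ℝ) + 1) + 3 = a + b + 4 * m + 5 by ring,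
    show a + b + 2 * (2 * (m : ℝ) + 1) + 1 = a + b + 4 * m + 3 by ring,
    show a + b + (2 * (m : ℝ) + 1) + 1 = 2 * (a / 2 + b / 2 + m + 1) by ring,
    show a + (2 * (m : ℝ) + 1) + 1 = 2 * (a / 2 + m + 1) by ring,
    show b + (2 * (m : ℝ) + 1) + 1 = 2 * (b / 2 + m + 1) by ring,
    show (2 * (m : ℝ) + 1) + 1 = 2 * (m + 1) by ring]
  have k1 : (m : ℝ) + 1 ≠ 0 := by positivity
  have k2 : a / 2 + b / 2 + (m : ℝ) + 1 ≠ 0 := by positivity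
  have k3 : a / 2 + (m : ℝ) + 1 ≠ 0 := by positivity
  have k4 : b / 2 + (m : ℝ) + 1 ≠ 0 := by positivity
  have l1 : a + b + 4 * (m : ℝ) + 2 ≠ 0 := by positivity
  have l2 : a + b + 4 * (m : ℝ) + 3 ≠ 0 := by positivity
  have l3 : a + b + 4 * (m : ℝ) + 4 ≠ 0 := by positivity
  have l4 : a + b + 4 * (m : ℝ) + 5 ≠ 0 := by positivity
  generalize a / 2 + b / 2 + (m : ℝ) + 1 = Y1 at *
  generalize a / 2 + (m : ℝ) + 1 = Y2 at *
  generalize b / 2 + (m : ℝ) + 1 = Y3 at *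
  generalize (m : ℝ) + 1 = Y4 at *
  generalize jacobiNorm a b (2 * m + 1) = Z1 at *
  generalize cc a b m = Z2 at *
  generalize a + b + 4 * (m : ℝ) + 2 = U1 at *
  generalize a + b + 4 * (m : ℝ) + 3 = U2 at *
  generalize a + b + 4 * (m : ℝ) + 4 = U3 at *
  generalize a + b + 4 * (m : ℝ) + 5 = U4 at *
  field_simp
  try norm_num

lemma q_zero (a b : ℝ) (ha : 0 < a) (hb : 0 < b) : qJSE a b (2 * 0) = jacobiMonic a b 0 := by
  funext x
  have := (cc_pos a b ha hb 0).ne'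
  rw [q_even]
  simp [this]

lemma q_succ (a b : ℝ) (ha : 0 < a) (hb : 0 < b) (m : ℕ) : qJSE a b (2 * (m + 1)) =
    fun x => jacobiMonic a b (2 * m + 2) x + (A a b (2 * m + 1) * jacobiNorm a b (2 * m + 2) /
      (A a b (2 * m) * jacobiNorm a b (2 * m + 1))) * qJSE a b (2 * m) x := by
  funext x
  have h1 := (cc_pos a b ha hb m).ne'
  have h2 := (cc_pos a b ha hb (m + 1)).ne'
  rw [q_even, q_even, Finset.sum_range_succ, ← cc_succ a b ha hb, show 2 * (m + 1) = 2 * m + 2 by ring]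
  field_simp
  ring

lemma q_L (a b : ℝ) (ha : 0 < a) (hb : 0 < b) (m : ℕ) (x : ℝ) :
    HasL a b (qJSE a b (2 * m)) (-A a b (2 * m) * jacobiMonic a b (2 * m + 1) x) x := by
  induction m with
  | zero => rw [q_zero a b ha hb]; exact p_zero a b ha hb x
  | succ m ih =>
    rw [q_succ a b ha hb]
    have h := (p_succ a b ha hb (2 * m + 1) x).add ih (A a b (2 * m + 1) * jacobiNorm a b (2 * m + 2) /
      (A a b (2 * m) * jacobiNorm a b (2 * m + 1)))
    convert h using 1
    have h1 := (A_pos a b ha hb (2 * m)).ne'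
    have h2 := (norm_pos a b ha hb (2 * m + 1)).ne'
    rw [show 2 * (m + 1) = 2 * m + 2 by ring]
    field_simp
    ring

lemma r_eq (a b : ℝ) (ha : 0 < a) (hb : 0 < b) (m : ℕ) :
    rJSE a b m = A a b (2 * m) * jacobiNorm a b (2 * m + 1) := by
  unfold rJSE jacobiNorm A
  push_cast
  have g2 : Real.Gamma (a + b + 2 * (2 * (m : ℝ) + 1) + 1) = _ :=
    Gam (a + b + 4 * m + 2) _ (by positivity) (by ring)
  have e : (2 : ℝ) ^ (a + b + 1 + 2 * (2 * (m : ℝ) + 1)) = 2 * 2 ^ (a + b + 4 * (m : ℝ) + 2) := by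
    rw [show a + b + 1 + 2 * (2 * (m : ℝ) + 1) = (a + b + 4 * (m : ℝ) + 2) + 1 by ring,
      Real.rpow_add (by norm_num)]
    norm_num; ring
  rw [g2, e, show a + b + 2 * (2 * (m : ℝ) + 1) + 2 = a + b + 4 * m + 4 by ring,
    show a + b + (2 * (m : ℝ) + 1) + 1 = a + b + 2 * m + 2 by ring,
    show a + (2 * (m : ℝ) + 1) + 1 = a + 2 * m + 2 by ring,
    show b + (2 * (m : ℝ) + 1) + 1 = b + 2 * m + 2 by ring,
    show (2 * (m : ℝ) + 1) + 1 = 2 * m + 2 by ring,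
    show 2 * (m : ℝ) + (a + b + 2) / 2 = (a + b + 4 * m + 2) / 2 by ring]
  have l1 : a + b + 4 * (m : ℝ) + 2 ≠ 0 := by positivity
  have l2 := (Real.Gamma_pos_of_pos (show 0 < a + b + 4 * (m : ℝ) + 2 by positivity)).ne'
  have l3 := (Real.Gamma_pos_of_pos (show 0 < a + b + 4 * (m : ℝ) + 4 by positivity)).ne'
  field_simp

/-- reduced weight -/
noncomputable def w0 (a b t : ℝ) : ℝ := (1 - t) ^ ((a - 1) / 2) * (1 + t) ^ ((b - 1) / 2)

lemma w_eq (a b : ℝ) {t : ℝ} (ht : t ∈ Set.Ioo (-1 : ℝ) 1) :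
    wJSE a b t = w0 a b t * (1 - t ^ 2) := by
  obtain ⟨h1, h2⟩ := ht
  unfold wJSE w0
  rw [show (a + 1) / 2 = (a - 1) / 2 + 1 by ring, show (b + 1) / 2 = (b - 1) / 2 + 1 by ring,
    Real.rpow_add_one (by linarith), Real.rpow_add_one (by linarith)]
  ring

lemma w_deriv (a b : ℝ) {t r : ℝ} {q : ℝ → ℝ} (ht : t ∈ Set.Ioo (-1 : ℝ) 1)
    (h : HasL a b q r t) : HasDerivAt (fun t => wJSE a b t * q t) (w0 a b t * r) t := by
  obtain ⟨d, hd, e⟩ := h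
  have hw := w_eq a b ht
  obtain ⟨h1, h2⟩ := ht
  have d1 : HasDerivAt (fun t : ℝ => (1 - t) ^ ((a + 1) / 2)) _ t :=
    ((hasDerivAt_id t).const_sub 1).rpow_const (p := (a + 1) / 2)
      (Or.inl (by simp only [id]; linarith))
  have d2 : HasDerivAt (fun t : ℝ => (1 + t) ^ ((b + 1) / 2)) _ t :=
    ((hasDerivAt_id t).const_add 1).rpow_const (p := (b + 1) / 2)
      (Or.inl (by simp only [id]; linarith))
  have := (d1.mul d2).mul hd
  refine HasDerivAt.congr_deriv this ?_
  rw [← e]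
  simp only [id, Pi.mul_apply]
  unfold w0
  rw [show (a + 1) / 2 - 1 = (a - 1) / 2 by ring, show (b + 1) / 2 - 1 = (b - 1) / 2 by ring]
  rw [show (1 - t) ^ ((a + 1) / 2) = (1 - t) ^ ((a - 1) / 2) * (1 - t) by
      rw [← Real.rpow_add_one (by linarith)]; congr 1; ring,
    show (1 + t) ^ ((b + 1) / 2) = (1 + t) ^ ((b - 1) / 2) * (1 + t) by
      rw [← Real.rpow_add_one (by linarith)]; congr 1; ring]
  ring

lemma p_cont (a b : ℝ) (ha : 0 < a) (hb : 0 < b) (k : ℕ) : Continuous (jacobiMonic a b k) := by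
  unfold jacobiMonic jacobiP
  fun_prop

lemma integral_eq (a b : ℝ) (ha : 0 < a) (hb : 0 < b) (m : ℕ) {x : ℝ}
    (hx : x ∈ Set.Ioo (-1 : ℝ) 1) :
    A a b (2 * m) * ∫ t in Set.Ioo x 1,
      (1 - t) ^ ((a - 1) / 2) * (1 + t) ^ ((b - 1) / 2) * jacobiMonic a b (2 * m + 1) t
      = wJSE a b x * qJSE a b (2 * m) x := by
  obtain ⟨h1, h2⟩ := hx
  rw [← integral_Ioc_eq_integral_Ioo, ← intervalIntegral.integral_of_le h2.le]
  have hIntg : IntervalIntegrable (fun t => (1 - t) ^ ((a - 1) / 2) * (1 + t) ^ ((b - 1) / 2) *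
      jacobiMonic a b (2 * m + 1) t) volume x 1 := by
    have i1 : IntervalIntegrable (fun t : ℝ => (1 - t) ^ ((a - 1) / 2)) volume x 1 := by
      have := (intervalIntegral.intervalIntegrable_rpow' (a := 1 - x) (b := 0) (r := (a - 1) / 2)
        (by linarith)).comp_sub_left 1
      simpa using this
    simp only [mul_assoc]
    apply i1.mul_continuousOn
    rw [Set.uIcc_of_le h2.le]
    refine ContinuousOn.mul ?_ (p_cont a b ha hb _).continuousOn
    refine ContinuousOn.rpow_const (by fun_prop) fun t ht => Or.inl ?_
    have := ht.1
    linarith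
  have hcq : Continuous (qJSE a b (2 * m)) := by
    rw [continuous_iff_continuousAt]
    intro t
    obtain ⟨d, hd, _⟩ := q_L a b ha hb m t
    exact hd.continuousAt
  have hcw : Continuous (wJSE a b) := by
    unfold wJSE
    refine Continuous.mul ?_ ?_
    · exact Continuous.rpow_const (by fun_prop) fun t => Or.inr (by positivity)
    · exact Continuous.rpow_const (by fun_prop) fun t => Or.inr (by positivity)
  have := intervalIntegral.integral_eq_sub_of_hasDerivAt_of_le h2.le
    (f := fun t => wJSE a b t * qJSE a b (2 * m) t)
    (f' := fun t => -A a b (2 * m) * ((1 - t) ^ ((a - 1) / 2) * (1 + t) ^ ((b - 1) / 2) *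
      jacobiMonic a b (2 * m + 1) t)) (hcw.mul hcq).continuousOn
    (fun t ht => by
      refine (w_deriv a b ⟨by linarith [ht.1], ht.2⟩ (q_L a b ha hb m t)).congr_deriv ?_
      unfold w0; ring) (hIntg.const_mul _)
  rw [intervalIntegral.integral_const_mul] at this
  have hw1 : wJSE a b 1 = 0 := by
    unfold wJSE
    rw [sub_self, Real.zero_rpow (by positivity), zero_mul]
  rw [hw1] at this
  linarith

lemma main_sum (a b : ℝ) (ha : 0 < a) (hb : 0 < b) (N : ℕ) (x y : ℝ)
    (hy : y ∈ Set.Ioo (-1 : ℝ) 1) :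
    S4JSE a b (N + 1) x y = 1 / 2 * wJSE a b x * w0 a b y *
      (∑ l ∈ range (2 * (N + 1)), jacobiMonic a b l x * jacobiMonic a b l y / jacobiNorm a b l
       - A a b (2 * N + 1) / (A a b (2 * N) * jacobiNorm a b (2 * N + 1)) *
        qJSE a b (2 * N) x * jacobiMonic a b (2 * N + 2) y) := by
  have d1 : ∀ m, deriv (fun t => wJSE a b t * qJSE a b (2 * m) t) y = _ :=
    fun m => (w_deriv a b hy (q_L a b ha hb m y)).deriv
  have h0 : ∀ k, jacobiNorm a b k ≠ 0 := fun k => (norm_pos a b ha hb k).ne'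
  have hA : ∀ k, A a b k ≠ 0 := fun k => (A_pos a b ha hb k).ne'
  induction N with
  | zero =>
    unfold S4JSE
    have d2 : deriv (fun t => wJSE a b t * qJSE a b (2 * 0 + 1) t) y = _ :=
      (w_deriv a b hy (by rw [q_odd]; exact p_succ a b ha hb (2 * 0) y)).deriv
    rw [zero_add, Finset.sum_range_one, d1, d2, r_eq a b ha hb, q_odd, q_zero a b ha hb]
    simp only [mul_zero, zero_add, mul_one, Finset.sum_range_succ, Finset.sum_range_zero]
    have := h0 0
    have := h0 1
    have := hA 0
    field_simp
    ring
  | succ N ih =>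
    have e : S4JSE a b (N + 1 + 1) x y = S4JSE a b (N + 1) x y + (wJSE a b x / (2 * rJSE a b (N + 1))) *
      (qJSE a b (2 * (N + 1)) x * deriv (fun t => wJSE a b t * qJSE a b (2 * (N + 1) + 1) t) y -
       qJSE a b (2 * (N + 1) + 1) x * deriv (fun t => wJSE a b t * qJSE a b (2 * (N + 1)) t) y) := by
      unfold S4JSE; rw [Finset.sum_range_succ]
    have d2 : deriv (fun t => wJSE a b t * qJSE a b (2 * (N + 1) + 1) t) y = _ :=
      (w_deriv a b hy (by rw [q_odd]; exact p_succ a b ha hb (2 * (N + 1)) y)).deriv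
    rw [e, d1, d2, ih, r_eq a b ha hb, q_odd]
    rw [show 2 * (N + 1 + 1) = 2 * (N + 1) + 1 + 1 by ring, Finset.sum_range_succ _ (2 * (N + 1) + 1),
      Finset.sum_range_succ _ (2 * (N + 1))]
    have hq : A a b (2 * N + 1) / (A a b (2 * N) * jacobiNorm a b (2 * N + 1)) * qJSE a b (2 * N) x
      = (qJSE a b (2 * (N + 1)) x - jacobiMonic a b (2 * N + 2) x) / jacobiNorm a b (2 * N + 2) := by
      rw [q_succ a b ha hb]
      have := h0 (2 * N + 1)
      have := h0 (2 * N + 2)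
      have := hA (2 * N)
      field_simp
      ring
    rw [hq, show 2 * (N + 1) = 2 * N + 2 by ring]
    generalize ∑ l ∈ range (2 * N + 2), jacobiMonic a b l x * jacobiMonic a b l y / jacobiNorm a b l = Z
    have := h0 (2 * N + 2)
    have := h0 (2 * N + 2 + 1)
    have := hA (2 * N + 2)
    field_simp
    ring

end JSEaux

/-- Closed-form summation of the Jacobi symplectic ensemble kernel `S̃₄(x,y)`. -/
theorem jse_kernel_summation (a b : ℝ) (ha : 0 < a) (hb : 0 < b) (N : ℕ) (hN : 1 ≤ N)
    (x y : ℝ) (hx : x ∈ Set.Ioo (-1 : ℝ) 1) (hy : y ∈ Set.Ioo (-1 : ℝ) 1) :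
    S4JSE a b N x y
      = (1 / 2) * (1 - x) ^ ((a + 1) / 2) * (1 + x) ^ ((b + 1) / 2) *
          (1 - y) ^ ((a - 1) / 2) * (1 + y) ^ ((b - 1) / 2) *
          ∑ l ∈ range (2 * N), jacobiMonic a b l x * jacobiMonic a b l y / jacobiNorm a b l
        - ((4 * (N : ℝ) + a + b) / (4 * jacobiNorm a b (2 * N - 1))) *
            ((1 - y) ^ ((a - 1) / 2) * (1 + y) ^ ((b - 1) / 2)) * jacobiMonic a b (2 * N) y *
            ∫ t in Set.Ioo x 1,
              (1 - t) ^ ((a - 1) / 2) * (1 + t) ^ ((b - 1) / 2) * jacobiMonic a b (2 * N - 1) t := by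
  obtain ⟨M, rfl⟩ : ∃ M, N = M + 1 := ⟨N - 1, by omega⟩
  have hI := JSEaux.integral_eq a b ha hb M hx
  rw [JSEaux.main_sum a b ha hb M x y hy]
  rw [show 2 * (M + 1) - 1 = 2 * M + 1 by omega]
  have hA := (JSEaux.A_pos a b ha hb (2 * M)).ne'
  have hh := (JSEaux.norm_pos a b ha hb (2 * M + 1)).ne'
  generalize (∫ t in Set.Ioo x 1, (1 - t) ^ ((a - 1) / 2) * (1 + t) ^ ((b - 1) / 2) *
    jacobiMonic a b (2 * M + 1) t) = I at *
  generalize hS : (∑ l ∈ range (2 * (M + 1)),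
    jacobiMonic a b l x * jacobiMonic a b l y / jacobiNorm a b l) = Z
  have hw : wJSE a b x = (1 - x) ^ ((a + 1) / 2) * (1 + x) ^ ((b + 1) / 2) := rfl
  have hw0 : JSEaux.w0 a b y = (1 - y) ^ ((a - 1) / 2) * (1 + y) ^ ((b - 1) / 2) := rfl
  have hA1 : 4 * ((M + 1 : ℕ) : ℝ) + a + b = 2 * JSEaux.A a b (2 * M + 1) := by
    unfold JSEaux.A; push_cast; ring
  rw [← hw0, hA1, show 2 * (M + 1) = 2 * M + 2 by ring]
  have hZ : 1 / 2 * (1 - x) ^ ((a + 1) / 2) * (1 + x) ^ ((b + 1) / 2) * (1 - y) ^ ((a - 1) / 2) *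
      (1 + y) ^ ((b - 1) / 2) * Z = 1 / 2 * wJSE a b x * JSEaux.w0 a b y * Z := by
    rw [hw, hw0]; ring
  rw [hZ]
  have hI' : I = wJSE a b x * qJSE a b (2 * M) x / JSEaux.A a b (2 * M) := by
    rw [← hI]; field_simp
  rw [hI']
  field_simp
  ring
end

section
/- Let a > 0 be real and let N ≥ 2 be a natural number. Then for every x > 0: x^{a/2} e^{−x/2}·((N−1)!/Γ(a+N))·L_{N−1}^a(x) − (N!/(4Γ(a+N)))·∫_0^∞ sgn(x−u)·u^{a/2−1} e^{−u/2}·L_N^{a−1}(u) du = −((N−1)!/(4Γ(a+N)))·∫_0^∞ sgn(x−u)·u^{a/2} e^{−u/2}·L_{N−2}^{a+1}(u) du. -/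
open MeasureTheory Finset

/-- The generalized Laguerre polynomial `L_n^a`. -/
noncomputable def laguerreL (a : ℝ) (n : ℕ) (x : ℝ) : ℝ :=
  ∑ k ∈ range (n + 1),
    (-1) ^ k * (Real.Gamma ((n : ℝ) + a + 1) /
      (Real.Gamma ((k : ℝ) + a + 1) * (Nat.factorial k) * (Nat.factorial (n - k)))) * x ^ k


open Polynomial in
/-- The Laguerre polynomial as a formal polynomial. -/
noncomputable def lagP (a : ℝ) (n : ℕ) : ℝ[X] :=
  ∑ k ∈ range (n + 1), Polynomial.monomial k
    ((-1) ^ k * (Real.Gamma ((n : ℝ) + a + 1) /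
      (Real.Gamma ((k : ℝ) + a + 1) * (Nat.factorial k) * (Nat.factorial (n - k)))))

lemma lagP_eval (a : ℝ) (n : ℕ) (x : ℝ) : (lagP a n).eval x = laguerreL a n x := by
  simp [lagP, laguerreL, Polynomial.eval_finsetSum]

lemma lagP_coeff (a : ℝ) (n k : ℕ) : (lagP a n).coeff k =
    if k < n + 1 then ((-1) ^ k * (Real.Gamma ((n : ℝ) + a + 1) /
      (Real.Gamma ((k : ℝ) + a + 1) * (Nat.factorial k) * (Nat.factorial (n - k))))) else 0 := by
  simp [lagP, Polynomial.finsetSum_coeff, Polynomial.coeff_monomial]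

lemma lagP_deriv (a : ℝ) (ha : 0 < a) (n : ℕ) :
    Polynomial.derivative (lagP a (n + 1)) = - lagP (a + 1) n := by
  ext k
  rw [Polynomial.coeff_derivative, Polynomial.coeff_neg, lagP_coeff, lagP_coeff]
  by_cases h : k < n + 1
  · rw [if_pos h, if_pos (by omega)]
    have e1 : n + 1 - (k + 1) = n - k := by omega
    have e2 : ((n + 1 : ℕ) : ℝ) + a + 1 = n + (a + 1) + 1 := by push_cast; ring
    have e3 : ((k + 1 : ℕ) : ℝ) + a + 1 = k + (a + 1) + 1 := by push_cast; ring
    rw [e1, e2, e3, Nat.factorial_succ]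
    have : Real.Gamma (k + (a + 1) + 1) ≠ 0 := (Real.Gamma_pos_of_pos (by positivity)).ne'
    have := Nat.factorial_ne_zero k
    have := Nat.factorial_ne_zero (n - k)
    have : (k : ℝ) + 1 ≠ 0 := by positivity
    push_cast
    field_simp
    ring
  · rw [if_neg h, if_neg (by omega)]; simp

lemma lagP_rec (a : ℝ) (ha : 0 < a) (n : ℕ) :
    Polynomial.C a * lagP a (n + 1) - lagP a (n + 1) * Polynomial.X
      - lagP (a + 1) n * Polynomial.X = Polynomial.C ((n : ℝ) + 2) * lagP (a - 1) (n + 2) := by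
  have G0 : ∀ k : ℕ, Real.Gamma (k + a + 1) = (k + a) * Real.Gamma (k + a) := fun k =>
    Real.Gamma_add_one (by positivity)
  have G1 : ∀ k : ℕ, Real.Gamma (k + a) ≠ 0 := fun k =>
    (Real.Gamma_pos_of_pos (by positivity)).ne'
  have G2 : ∀ k : ℕ, (k : ℝ) + a ≠ 0 := fun k => by positivity
  have e1 : ((n + 1 : ℕ) : ℝ) + a + 1 = (n : ℝ) + a + 2 := by push_cast; ring
  have e2 : (n : ℝ) + (a + 1) + 1 = (n : ℝ) + a + 2 := by ring
  have e3 : ((n + 2 : ℕ) : ℝ) + (a - 1) + 1 = (n : ℝ) + a + 2 := by push_cast; ring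
  ext k
  rcases k with _ | k
  · simp only [Polynomial.coeff_sub, Polynomial.coeff_C_mul, Polynomial.coeff_mul_X_zero, lagP_coeff,
      e1, e3]
    have h := G0 0
    have h1 := G1 0
    have h2 : a ≠ 0 := ha.ne'
    simp only [Nat.cast_zero, zero_add] at h h1 ⊢
    simp only [sub_add_cancel, h]
    rw [if_pos (by omega), if_pos (by omega)]
    simp only [Nat.sub_zero, Nat.factorial_succ (n + 1)]
    have := Nat.factorial_ne_zero (n + 1)
    have : (n : ℝ) + 2 ≠ 0 := by positivity
    have : (n : ℝ) + 1 + 1 ≠ 0 := by positivity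
    push_cast
    field_simp
    ring
  · simp only [Polynomial.coeff_sub, Polynomial.coeff_C_mul, Polynomial.coeff_mul_X, lagP_coeff,
      e1, e2, e3]
    have f1 : (k : ℝ) + (a + 1) + 1 = ((k + 1 : ℕ) : ℝ) + a + 1 := by push_cast; ring
    have f2 : ((k + 1 : ℕ) : ℝ) + (a - 1) + 1 = (k : ℝ) + a + 1 := by push_cast; ring
    have f3 : ((k + 1 : ℕ) : ℝ) + a = (k : ℝ) + a + 1 := by push_cast; ring
    rw [f1, f2, G0 (k + 1), f3]
    have g1 : Real.Gamma (k + a + 1) ≠ 0 := (Real.Gamma_pos_of_pos (by positivity)).ne'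
    have g2 : (k : ℝ) + a + 1 ≠ 0 := by positivity
    have g3 := Nat.factorial_ne_zero k
    have g4 : (k : ℝ) + 1 ≠ 0 := by positivity
    rcases lt_trichotomy k (n + 1) with h | h | h
    · obtain h' | ⟨m, rfl⟩ : k = n ∨ ∃ m, n = k + 1 + m := by
        rcases Nat.lt_or_ge k n with h1 | h1
        · exact Or.inr ⟨n - k - 1, by omega⟩
        · left; omega
      · subst h'
        rw [if_pos (by omega), if_pos (by omega), if_pos (by omega), if_pos (by omega)]
        have i1 : k + 1 - (k + 1) = 0 := by omega
        have i2 : k + 1 - k = 1 := by omega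
        have i3 : k - k = 0 := by omega
        have i4 : k + 2 - (k + 1) = 1 := by omega
        rw [i1, i2, i3, i4]
        simp only [Nat.factorial_succ, Nat.factorial_zero]
        push_cast
        field_simp
        ring
      · rw [if_pos (by omega), if_pos (by omega), if_pos (by omega), if_pos (by omega)]
        have i1 : k + 1 + m + 1 - (k + 1) = m + 1 := by omega
        have i2 : k + 1 + m + 1 - k = m + 1 + 1 := by omega
        have i3 : k + 1 + m - k = m + 1 := by omega
        have i4 : k + 1 + m + 2 - (k + 1) = m + 1 + 1 := by omega
        rw [i1, i2, i3, i4]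
        have g5 := Nat.factorial_ne_zero m
        have g6 : (m : ℝ) + 1 ≠ 0 := by positivity
        have g7 : (m : ℝ) + 1 + 1 ≠ 0 := by positivity
        simp only [Nat.factorial_succ]
        push_cast
        field_simp
        ring
    · subst h
      rw [if_neg (by omega), if_pos (by omega), if_neg (by omega), if_pos (by omega)]
      have i2 : n + 1 - (n + 1) = 0 := by omega
      have i4 : n + 2 - (n + 1 + 1) = 0 := by omega
      rw [i2, i4]
      have g5 := Nat.factorial_ne_zero n
      have g6 : (n : ℝ) + 1 ≠ 0 := by positivity
      have g7 : (n : ℝ) + 1 + 1 ≠ 0 := by positivity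
      simp only [Nat.factorial_succ, Nat.factorial_zero]
      push_cast at *
      field_simp
      ring
    · rw [if_neg (by omega), if_neg (by omega), if_neg (by omega), if_neg (by omega)]; simp

lemma poly_int (s : ℝ) (hs : -1 < s) (p : Polynomial ℝ) :
    IntegrableOn (fun u : ℝ => u ^ s * Real.exp (-u / 2) * p.eval u) (Set.Ioi 0) := by
  induction p using Polynomial.induction_on' with
  | add p q hp hq =>
    refine (hp.add hq).congr_fun (fun u _ => ?_) measurableSet_Ioi
    simp only [Pi.add_apply, Polynomial.eval_add]; ring
  | monomial n c =>
    have h := integrableOn_rpow_mul_exp_neg_mul_rpow (p := 1) (s := s + n) (b := 1 / 2)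
      (by have : (0 : ℝ) ≤ n := n.cast_nonneg
          linarith) one_pos (by norm_num)
    have h' : IntegrableOn _ (Set.Ioi (0 : ℝ)) := h.mul_const c
    refine h'.congr_fun (fun u hu => ?_) measurableSet_Ioi
    have hu : 0 < u := hu
    simp only [Polynomial.eval_monomial, Real.rpow_one]
    rw [Real.rpow_add hu, Real.rpow_natCast, show -(1 / 2) * u = -u / 2 by ring]
    ring

lemma poly_tendsto (s : ℝ) (p : Polynomial ℝ) :
    Filter.Tendsto (fun u : ℝ => u ^ s * Real.exp (-u / 2) * p.eval u) Filter.atTop (nhds 0) := by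
  induction p using Polynomial.induction_on' with
  | add p q hp hq =>
    have h := hp.add hq
    rw [add_zero] at h
    refine h.congr (fun u => ?_)
    simp only [Polynomial.eval_add]; ring
  | monomial n c =>
    have h := (tendsto_rpow_mul_exp_neg_mul_atTop_nhds_zero (s + n) (1 / 2)
      (by norm_num)).mul_const c
    rw [zero_mul] at h
    refine h.congr' ?_
    filter_upwards [Filter.eventually_gt_atTop 0] with u hu
    simp only [Polynomial.eval_monomial]
    rw [Real.rpow_add hu, Real.rpow_natCast, show -(1 / 2) * u = -u / 2 by ring]
    ring

lemma sign_int {f : ℝ → ℝ} {x : ℝ} (hf : IntegrableOn f (Set.Ioi 0)) :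
    IntegrableOn (fun u => Real.sign (x - u) * f u) (Set.Ioi 0) := by
  have hm : Measurable fun u : ℝ => Real.sign (x - u) := by
    have : Measurable Real.sign := by
      unfold Real.sign
      exact Measurable.ite measurableSet_Iio measurable_const
        (Measurable.ite measurableSet_Ioi measurable_const measurable_const)
    fun_prop
  refine Integrable.bdd_mul (c := 1) hf hm.aestronglyMeasurable (Filter.Eventually.of_forall fun u => ?_)
  rcases Real.sign_apply_eq (x - u) with h | h | h <;> simp [h]

lemma sign_ftc {F f : ℝ → ℝ} {x : ℝ} (hx : 0 < x) (hf : IntegrableOn f (Set.Ioi 0))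
    (hF : Continuous F) (hd : ∀ u, 0 < u → HasDerivAt F (f u) u) (h0 : F 0 = 0)
    (hinf : Filter.Tendsto F Filter.atTop (nhds 0)) :
    ∫ u in Set.Ioi (0 : ℝ), Real.sign (x - u) * f u = 2 * F x := by
  have hs := sign_int (x := x) hf
  rw [← Set.Ioc_union_Ioi_eq_Ioi hx.le] at hs hf ⊢
  rw [setIntegral_union (Set.Ioc_disjoint_Ioi le_rfl) measurableSet_Ioi
    (hs.mono_set Set.subset_union_left) (hs.mono_set Set.subset_union_right)]
  have hf1 := hf.mono_set Set.subset_union_left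
  have hf2 := hf.mono_set Set.subset_union_right
  have A : ∫ u in Set.Ioc 0 x, Real.sign (x - u) * f u = F x := by
    rw [integral_Ioc_eq_integral_Ioo]
    have : ∫ u in Set.Ioo 0 x, Real.sign (x - u) * f u = ∫ u in Set.Ioo 0 x, f u := by
      refine setIntegral_congr_fun measurableSet_Ioo (fun u hu => ?_)
      rw [Real.sign_of_pos (by linarith [hu.2]), one_mul]
    rw [this, ← integral_Ioc_eq_integral_Ioo, ← intervalIntegral.integral_of_le hx.le,
      intervalIntegral.integral_eq_sub_of_hasDerivAt_of_le hx.le hF.continuousOn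
        (fun u hu => hd u hu.1) ((intervalIntegrable_iff_integrableOn_Ioc_of_le hx.le).2 hf1),
      h0, sub_zero]
  have B : ∫ u in Set.Ioi x, Real.sign (x - u) * f u = F x := by
    have : ∫ u in Set.Ioi x, Real.sign (x - u) * f u = ∫ u in Set.Ioi x, -f u := by
      refine setIntegral_congr_fun measurableSet_Ioi (fun u hu => ?_)
      have hu : x < u := hu
      rw [Real.sign_of_neg (by linarith), neg_one_mul]
    rw [this, integral_neg, integral_Ioi_of_hasDerivAt_of_tendsto hF.continuousWithinAt
      (fun u hu => hd u (hx.trans hu)) hf2 hinf]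
    ring
  rw [A, B]; ring

/-- Reconciliation of the two closed-form expressions for the β = 1 Laguerre kernel. -/
theorem laguerre_kernel_reconciliation (a : ℝ) (ha : 0 < a) (N : ℕ) (hN : 2 ≤ N)
    (x : ℝ) (hx : 0 < x) :
    x ^ (a / 2) * Real.exp (-x / 2) *
        ((Nat.factorial (N - 1)) / Real.Gamma (a + N)) * laguerreL a (N - 1) x
      - ((Nat.factorial N) / (4 * Real.Gamma (a + N))) *
        ∫ u in Set.Ioi (0 : ℝ),
          Real.sign (x - u) * (u ^ (a / 2 - 1) * Real.exp (-u / 2)) * laguerreL (a - 1) N u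
      = -(((Nat.factorial (N - 1)) / (4 * Real.Gamma (a + N))) *
          ∫ u in Set.Ioi (0 : ℝ),
            Real.sign (x - u) * (u ^ (a / 2) * Real.exp (-u / 2)) *
              laguerreL (a + 1) (N - 2) u) := by
  obtain ⟨n, rfl⟩ : ∃ n, N = n + 2 := ⟨N - 2, by omega⟩
  simp only [show n + 2 - 1 = n + 1 by omega, show n + 2 - 2 = n by omega, ← lagP_eval]
  have i1 := sign_int (x := x) (poly_int (a / 2 - 1) (by linarith) (lagP (a - 1) (n + 2)))
  have i2 := sign_int (x := x) (poly_int (a / 2) (by linarith) (lagP (a + 1) n))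
  have key := sign_ftc (x := x)
    (F := fun u : ℝ => u ^ (a / 2) * Real.exp (-u / 2) * (2 * (lagP a (n + 1)).eval u))
    (f := fun u : ℝ => ((n : ℝ) + 2) *
        (u ^ (a / 2 - 1) * Real.exp (-u / 2) * (lagP (a - 1) (n + 2)).eval u)
      - u ^ (a / 2) * Real.exp (-u / 2) * (lagP (a + 1) n).eval u) hx
    (((poly_int (a / 2 - 1) (by linarith) (lagP (a - 1) (n + 2))).const_mul _).sub
      (poly_int (a / 2) (by linarith) (lagP (a + 1) n))) ?_ ?_ ?_ ?_
  · have e : ∀ u : ℝ, Real.sign (x - u) * (((n : ℝ) + 2) *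
        (u ^ (a / 2 - 1) * Real.exp (-u / 2) * (lagP (a - 1) (n + 2)).eval u)
      - u ^ (a / 2) * Real.exp (-u / 2) * (lagP (a + 1) n).eval u) =
      ((n : ℝ) + 2) * (Real.sign (x - u) *
        (u ^ (a / 2 - 1) * Real.exp (-u / 2) * (lagP (a - 1) (n + 2)).eval u))
      - Real.sign (x - u) * (u ^ (a / 2) * Real.exp (-u / 2) * (lagP (a + 1) n).eval u) := by
      intro u; ring
    simp only [e] at key
    rw [integral_sub (i1.const_mul _) i2, integral_const_mul] at key
    simp only [← mul_assoc] at key ⊢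
    have hG : Real.Gamma (a + (n + 2 : ℕ)) ≠ 0 := (Real.Gamma_pos_of_pos (by positivity)).ne'
    rw [Nat.factorial_succ (n + 1)]
    generalize Real.Gamma (a + (n + 2 : ℕ)) = G at *
    generalize (∫ u in Set.Ioi (0 : ℝ), Real.sign (x - u) * u ^ (a / 2 - 1) *
      Real.exp (-u / 2) * (lagP (a - 1) (n + 2)).eval u) = I at *
    generalize (∫ u in Set.Ioi (0 : ℝ), Real.sign (x - u) * u ^ (a / 2) *
      Real.exp (-u / 2) * (lagP (a + 1) n).eval u) = J at *
    generalize Real.exp (-x / 2) = E at *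
    push_cast at key ⊢
    field_simp
    linear_combination -key
  · have h1 : Continuous fun u : ℝ => u ^ (a / 2) := Real.continuous_rpow_const (by linarith)
    fun_prop
  · intro u hu
    have h1 := Real.hasDerivAt_rpow_const (x := u) (p := a / 2) (Or.inl hu.ne')
    have h2 : HasDerivAt (fun u : ℝ => Real.exp (-u / 2)) (Real.exp (-u / 2) * (-1 / 2)) u :=
      (((hasDerivAt_id u).neg).div_const 2).exp
    have h3 := ((lagP a (n + 1)).hasDerivAt u).const_mul 2
    refine ((h1.mul h2).mul h3).congr_deriv ?_
    have hr := congrArg (Polynomial.eval u) (lagP_rec a ha n)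
    simp only [Polynomial.eval_sub, Polynomial.eval_mul, Polynomial.eval_C,
      Polynomial.eval_X] at hr
    rw [lagP_deriv a ha, Polynomial.eval_neg]
    have hp : u ^ (a / 2) = u ^ (a / 2 - 1) * u := by
      rw [← Real.rpow_add_one hu.ne']; ring_nf
    simp only [Pi.mul_apply]
    rw [hp]
    linear_combination (u ^ (a / 2 - 1) * Real.exp (-u / 2)) * hr
  · simp [Real.zero_rpow (show a / 2 ≠ 0 by positivity)]
  · have := poly_tendsto (a / 2) (Polynomial.C 2 * lagP a (n + 1))
    simpa using this
end
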